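/- arXiv:2411.04683 — 2 statements merged into one kernel-verified Lean document; each statement's English description precedes it below -/
import Mathlib

section
/- Let Ω ⊂ ℂ be a bounded, open, simply connected set whose frontier Γ = ∂Ω equals the image of an injective, twice continuously differentiable map γ : S¹ → ℂ from the unit circle. Then there exist functions ξ, η : closure(Ω) → ℝ that are continuous on closure(Ω), harmonic on Ω, and satisfy the boundary conditions ξ(γ(e^{iθ})) = cos θ and η(γ(e^{iθ})) = sin θ for all θ ∈ [0, 2π); equivalently, there exists a map g = ξ + iη : closure(Ω) → ℂ, continuous on closure(Ω), with harmonic real and imaginary parts on Ω, such that g(γ(z)) = z for all z ∈ S¹. -/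
open Complex Metric Set

/-- A real-valued function on `ℂ ≅ ℝ²` is harmonic on an open set `U` if it is twice
continuously differentiable on `U` and its Laplacian vanishes identically on `U`. -/
def HarmonicOnSet (f : ℂ → ℝ) (U : Set ℂ) : Prop :=
  ContDiffOn ℝ 2 f U ∧
    ∀ p ∈ U,
      fderiv ℝ (fun z => fderiv ℝ f z 1) p 1 +
        fderiv ℝ (fun z => fderiv ℝ f z Complex.I) p Complex.I = 0

/-!
The boundary data `γ⁻¹`, whose real and imaginary parts extend continuously to the plane by Tietze's
theorem, are attained by Perron's solution of the Dirichlet problem as soon as every boundary point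
`a` of `Ω` has a barrier. To build one at scale `r`, take a branch `w` on `Ω` of
`-I * log ((z - a) / r)`, which exists because `Ω` is simply connected. It sends `Ω ∩ ball a r` into
the upper half-plane and `Ω ∩ sphere a r` onto an open set `E` of reals on which
`t ↦ exp (I * t)` is injective, so `E` has finite length. The Poisson integral over the half-plane
of the indicator of `E`, evaluated at `w z`, tends to `0` as `z → a` because `(w z).im → ∞`, and is
bounded below near `Ω ∩ sphere a r`, so that its truncation extends by a constant to the rest of
`Ω`.
-/

section

open Filter Topology InnerProductSpace Real MeasureTheory

section PoissonIntegral

variable {g g₁ g₂ : ℂ → ℝ} {c w : ℂ} {R : ℝ}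

/-- The Poisson integral of `g` over the circle `sphere c R`, the candidate solution of the
Dirichlet problem on the disc `ball c R` with boundary values `g`. -/
noncomputable def poissonIntegral (g : ℂ → ℝ) (c : ℂ) (R : ℝ) (w : ℂ) : ℝ :=
  circleAverage (poissonKernel c w • g) c R

lemma continuousOn_poissonKernel (hw : w ∈ ball c R) :
    ContinuousOn (poissonKernel c w) (sphere c R) := by
  have h := continuousOn_herglotzRieszKernel_sphere hw
  rw [abs_of_pos (pos_of_mem_ball hw)] at h
  rw [poissonKernel_eq_re_herglotzRieszKernel]
  exact Complex.continuous_re.comp_continuousOn h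

lemma poissonKernel_nonneg {z : ℂ} (hw : w ∈ ball c R) (hz : z ∈ sphere c R) :
    0 ≤ poissonKernel c w z := by
  rw [mem_ball, dist_eq_norm] at hw
  rw [mem_sphere, dist_eq_norm] at hz
  rw [poissonKernel_def, hz]
  have : ‖w - c‖ ^ 2 ≤ R ^ 2 := by gcongr
  exact div_nonneg (sub_nonneg.2 this) (by positivity)

lemma poissonKernel_le_three {z : ℂ} (hR : 0 < R) (hw : w ∈ closedBall c (R / 2))
    (hz : z ∈ sphere c R) : poissonKernel c w z ≤ 3 := by
  have hwR : w ∈ ball c R := closedBall_subset_ball (half_lt_self hR) hw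
  rw [poissonKernel_eq_re_herglotzRieszKernel]
  refine (re_herglotzRieszKernel_le hz hwR).trans ?_
  rw [mem_closedBall, dist_eq_norm] at hw
  rw [div_le_iff₀ (by linarith)]
  linarith

lemma circleIntegrable_poissonKernel_smul (hg : ContinuousOn g (sphere c R)) (hw : w ∈ ball c R) :
    CircleIntegrable (poissonKernel c w • g) c R :=
  ((continuousOn_poissonKernel hw).smul hg).circleIntegrable (pos_of_mem_ball hw).le

lemma harmonicOnNhd_poissonIntegral (hg : ContinuousOn g (sphere c R)) :
    HarmonicOnNhd (poissonIntegral g c R) (ball c R) := by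
  intro w hw
  have hR : 0 ≤ R := (pos_of_mem_ball hw).le
  set g₀ : ℂ → ℝ := fun z => g (z + c)
  have hg₀ : ContinuousOn g₀ (sphere 0 R) :=
    hg.comp (by fun_prop) fun z hz => by simpa using hz
  have hF := analyticOnNhd_circleAverage_herglotzRieszKernel_smul
    ((Complex.continuous_ofReal.comp_continuousOn hg₀).circleIntegrable hR)
  have hsub : ∀ v ∈ ball c R, v - c ∈ ball (0 : ℂ) R := fun v hv => by
    simpa [dist_eq_norm] using hv
  have hre := ((hF _ (hsub w hw)).fun_comp (f := fun v : ℂ => v - c) (by fun_prop)).harmonicAt_re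
  refine (harmonicAt_congr_nhds ?_).1 hre
  filter_upwards [isOpen_ball.mem_nhds hw] with v hv
  refine (re_circleAverage_herglotzRieszKernel_smul (hg₀.circleIntegrable hR) (hsub v hv)).trans ?_
  rw [poissonIntegral, ← circleAverage_map_add_const (c := c)]
  congr 1
  ext z
  simp [poissonKernel_eq_re_herglotzRieszKernel, herglotzRieszKernel_add_const, g₀]

lemma poissonIntegral_eq_of_harmonicContOnCl (hg : HarmonicContOnCl g (ball c R))
    (hw : w ∈ ball c R) : poissonIntegral g c R w = g w :=
  hg.circleAverage_poissonKernel_smul hw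

lemma poissonIntegral_center (g : ℂ → ℝ) (hR : 0 < R) :
    poissonIntegral g c R c = circleAverage g c R := by
  refine circleAverage_congr_sphere fun z hz => ?_
  rw [abs_of_pos hR, mem_sphere, dist_eq_norm] at hz
  simp [poissonKernel, hz, hR.ne']

lemma poissonIntegral_sub (h₁ : ContinuousOn g₁ (sphere c R)) (h₂ : ContinuousOn g₂ (sphere c R))
    (hw : w ∈ ball c R) :
    poissonIntegral (g₁ - g₂) c R w = poissonIntegral g₁ c R w - poissonIntegral g₂ c R w := by
  simp only [poissonIntegral, smul_sub]
  exact circleAverage_sub (circleIntegrable_poissonKernel_smul h₁ hw)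
    (circleIntegrable_poissonKernel_smul h₂ hw)

lemma poissonIntegral_mono (h₁ : ContinuousOn g₁ (sphere c R)) (h₂ : ContinuousOn g₂ (sphere c R))
    (hle : ∀ z ∈ sphere c R, g₁ z ≤ g₂ z) (hw : w ∈ ball c R) :
    poissonIntegral g₁ c R w ≤ poissonIntegral g₂ c R w := by
  refine circleAverage_mono (circleIntegrable_poissonKernel_smul h₁ hw)
    (circleIntegrable_poissonKernel_smul h₂ hw) fun z hz => ?_
  rw [abs_of_pos (pos_of_mem_ball hw)] at hz
  exact mul_le_mul_of_nonneg_left (hle z hz) (poissonKernel_nonneg hw hz)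

lemma poissonIntegral_le_three_mul_circleAverage (hR : 0 < R) (hg : ContinuousOn g (sphere c R))
    (hg₀ : ∀ z ∈ sphere c R, 0 ≤ g z) (hw : w ∈ closedBall c (R / 2)) :
    poissonIntegral g c R w ≤ 3 * circleAverage g c R := by
  have hwR : w ∈ ball c R := closedBall_subset_ball (half_lt_self hR) hw
  rw [← smul_eq_mul, ← circleAverage_smul]
  refine circleAverage_mono (circleIntegrable_poissonKernel_smul hg hwR)
    ((hg.const_smul (3 : ℝ)).circleIntegrable hR.le) fun z hz => ?_
  rw [abs_of_pos hR] at hz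
  exact mul_le_mul_of_nonneg_right (poissonKernel_le_three hR hw hz) (hg₀ z hz)

lemma poissonIntegral_sub_le_three_mul (hR : 0 < R) (h₁ : ContinuousOn g₁ (sphere c R))
    (h₂ : ContinuousOn g₂ (sphere c R)) (hle : ∀ z ∈ sphere c R, g₁ z ≤ g₂ z)
    (hw : w ∈ closedBall c (R / 2)) :
    poissonIntegral g₂ c R w - poissonIntegral g₁ c R w ≤
      3 * (poissonIntegral g₂ c R c - poissonIntegral g₁ c R c) := by
  have hwR : w ∈ ball c R := closedBall_subset_ball (half_lt_self hR) hw
  rw [← poissonIntegral_sub h₂ h₁ hwR, ← poissonIntegral_sub h₂ h₁ (mem_ball_self hR),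
    poissonIntegral_center _ hR]
  exact poissonIntegral_le_three_mul_circleAverage hR (h₂.sub h₁)
    (fun z hz => sub_nonneg.2 (hle z hz)) hw

lemma abs_poissonIntegral_sub_le {v H : ℂ → ℝ} (hg : ContinuousOn g (sphere c R))
    (hv : HarmonicContOnCl v (ball c R)) (hH : HarmonicContOnCl H (ball c R))
    (hle : ∀ z ∈ sphere c R, |g z - v z| ≤ H z) (hw : w ∈ ball c R) :
    |poissonIntegral g c R w - v w| ≤ H w := by
  have hadd := hv.add hH
  have hsub := hv.sub hH
  have hupper : poissonIntegral g c R w ≤ (v + H) w := by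
    rw [← poissonIntegral_eq_of_harmonicContOnCl hadd hw]
    exact poissonIntegral_mono hg (hadd.continuousOn_ball.mono sphere_subset_closedBall)
      (fun z hz => by simpa using (sub_le_iff_le_add'.1 (abs_le.1 (hle z hz)).2)) hw
  have hlower : (v - H) w ≤ poissonIntegral g c R w := by
    rw [← poissonIntegral_eq_of_harmonicContOnCl hsub hw]
    exact poissonIntegral_mono (hsub.continuousOn_ball.mono sphere_subset_closedBall) hg
      (fun z hz => by
        simpa [neg_le_sub_iff_le_add, add_comm] using (abs_le.1 (hle z hz)).1) hw
  simp only [Pi.add_apply, Pi.sub_apply] at hupper hlower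
  exact abs_sub_le_iff.2 ⟨by linarith, by linarith⟩

lemma harmonicOnNhd_of_forall_exists_abs_sub_le {u : ℂ → ℝ}
    (h : ∀ ε > 0, ∃ v, HarmonicContOnCl v (ball c R) ∧ ∀ z ∈ closedBall c R, |u z - v z| ≤ ε) :
    HarmonicOnNhd u (ball c R) := by
  have hu : ContinuousOn u (closedBall c R) := by
    refine continuousOn_of_uniform_approx_of_continuousOn fun V hV => ?_
    obtain ⟨ε, hε, hεV⟩ := Metric.mem_uniformity_dist.1 hV
    obtain ⟨v, hv, huv⟩ := h (ε / 2) (half_pos hε)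
    exact ⟨v, hv.continuousOn_ball, fun z hz => hεV ((huv z hz).trans_lt (half_lt_self hε))⟩
  have hus := hu.mono sphere_subset_closedBall
  have hPu : ∀ z ∈ ball c R, poissonIntegral u c R z = u z := by
    intro z hz
    refine eq_of_forall_dist_le fun ε hε => ?_
    obtain ⟨v, hv, huv⟩ := h (ε / 2) (half_pos hε)
    have hP := abs_poissonIntegral_sub_le hus hv harmonicContOnCl_const
      (fun y hy => huv y (sphere_subset_closedBall hy)) hz
    have huvz := huv z (ball_subset_closedBall hz)
    rw [abs_sub_comm] at huvz
    exact (dist_triangle _ (v z) _).trans (by simpa [Real.dist_eq] using add_le_add hP huvz)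
  intro z hz
  refine (harmonicAt_congr_nhds ?_).1 (harmonicOnNhd_poissonIntegral hus z hz)
  filter_upwards [isOpen_ball.mem_nhds hz] with y hy using hPu y hy

lemma exists_dist_le_add_mul_dist_sq {X Y : Type*} [PseudoMetricSpace X] [PseudoMetricSpace Y]
    {s : Set X} (hs : IsCompact s) {f : X → Y} (hf : ContinuousOn f s) {x : X} (hx : x ∈ s)
    {ε : ℝ} (hε : 0 < ε) : ∃ A, ∀ y ∈ s, dist (f y) (f x) ≤ ε + A * dist y x ^ 2 := by
  obtain ⟨M, hM⟩ := (hs.image_of_continuousOn hf).isBounded.subset_closedBall (f x)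
  have hM' : ∀ y ∈ s, dist (f y) (f x) ≤ M := fun y hy => hM (mem_image_of_mem _ hy)
  have hM₀ : 0 ≤ M := dist_nonneg.trans (hM' x hx)
  obtain ⟨δ, hδ, hfδ⟩ := Metric.continuousWithinAt_iff.1 (hf x hx) ε hε
  refine ⟨M / δ ^ 2, fun y hy => ?_⟩
  rcases lt_or_ge (dist y x) δ with hnear | hfar
  · exact (hfδ hy hnear).le.trans (le_add_of_nonneg_right (by positivity))
  · calc dist (f y) (f x) ≤ M / δ ^ 2 * δ ^ 2 := by
          rw [div_mul_cancel₀ _ (by positivity)]; exact hM' y hy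
      _ ≤ M / δ ^ 2 * dist y x ^ 2 := by gcongr
      _ ≤ ε + M / δ ^ 2 * dist y x ^ 2 := le_add_of_nonneg_left hε.le

lemma dist_sq_eq_two_mul_re_of_mem_sphere {ζ z : ℂ} (hζ : ζ ∈ sphere c R) (hz : z ∈ sphere c R) :
    dist z ζ ^ 2 = 2 * ((ζ - z) * (starRingEnd ℂ) (ζ - c)).re := by
  rw [mem_sphere, dist_eq_norm] at hζ hz
  have hsq : ‖z - c‖ ^ 2 = ‖ζ - c‖ ^ 2 := by rw [hζ, hz]
  rw [dist_eq_norm]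
  simp only [← Complex.normSq_eq_norm_sq, Complex.normSq_apply, sub_re, sub_im, mul_re, conj_re,
    conj_im] at hsq ⊢
  linarith

lemma tendsto_poissonIntegral {ζ : ℂ} (hg : ContinuousOn g (sphere c R)) (hζ : ζ ∈ sphere c R) :
    Tendsto (poissonIntegral g c R) (𝓝[ball c R] ζ) (𝓝 (g ζ)) := by
  rw [Metric.tendsto_nhds]
  intro ε hε
  obtain ⟨A, hA⟩ := exists_dist_le_add_mul_dist_sq (isCompact_sphere c R) hg hζ (half_pos hε)
  -- On the circle, the squared distance to `ζ` is the restriction of a real affine function of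
  -- `z`, so it is its own Poisson integral.
  set L : ℂ → ℝ := fun z => ε / 2 + A * (2 * ((ζ - z) * (starRingEnd ℂ) (ζ - c)).re)
  have hL : HarmonicContOnCl L (ball c R) := by
    have hre : HarmonicContOnCl (fun z : ℂ => ((ζ - z) * (starRingEnd ℂ) (ζ - c)).re) (ball c R) :=
      HarmonicOnNhd.harmonicContOnCl fun z _ =>
        AnalyticAt.harmonicAt_re (f := fun z : ℂ => (ζ - z) * (starRingEnd ℂ) (ζ - c)) (by fun_prop)
    exact ((hre.const_smul 2).const_smul A).const_add (ε / 2)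
  have hLζ : ContinuousAt L ζ := by fun_prop
  have hlim : ∀ᶠ w in 𝓝 ζ, L w < ε :=
    hLζ.eventually_lt continuousAt_const (by simp [L, half_lt_self hε])
  filter_upwards [nhdsWithin_le_nhds hlim, self_mem_nhdsWithin] with w hwε hw
  refine (abs_poissonIntegral_sub_le hg harmonicContOnCl_const hL (fun z hz => ?_) hw).trans_lt hwε
  rw [← Real.dist_eq]
  exact (hA z hz).trans_eq (by rw [dist_sq_eq_two_mul_re_of_mem_sphere hζ hz])

end PoissonIntegral

section Subharmonic

variable {Ω : Set ℂ} {u v : ℂ → ℝ} {c : ℂ} {R : ℝ}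

/-- Continuous subharmonic functions on `Ω`, encoded by the submean value inequality on all
sufficiently small circles around each point. -/
structure IsSubharmonicOn (v : ℂ → ℝ) (Ω : Set ℂ) : Prop where
  continuousOn : ContinuousOn v Ω
  eventually_le_circleAverage : ∀ w ∈ Ω, ∀ᶠ r in 𝓝[>] (0 : ℝ), v w ≤ circleAverage v w r

lemma eventually_pos_and_closedBall_subset {X : Type*} [PseudoMetricSpace X] {U : Set X}
    (hU : IsOpen U) {x : X} (hx : x ∈ U) : ∀ᶠ r in 𝓝[>] (0 : ℝ), 0 < r ∧ closedBall x r ⊆ U :=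
  (eventually_mem_nhdsWithin).and
    (nhdsWithin_le_nhds (eventually_closedBall_subset (hU.mem_nhds hx)))

lemma circleIntegrable_of_closedBall_subset (hv : ContinuousOn v Ω) (hR : 0 < R)
    (hball : closedBall c R ⊆ Ω) : CircleIntegrable v c R :=
  (hv.mono (sphere_subset_closedBall.trans hball)).circleIntegrable hR.le

lemma circleAverage_mono_of_closedBall_subset (hv : ContinuousOn v Ω) (hu : ContinuousOn u Ω)
    (hle : ∀ z ∈ Ω, v z ≤ u z) (hR : 0 < R) (hball : closedBall c R ⊆ Ω) :
    circleAverage v c R ≤ circleAverage u c R := by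
  refine circleAverage_mono (circleIntegrable_of_closedBall_subset hv hR hball)
    (circleIntegrable_of_closedBall_subset hu hR hball) fun z hz => ?_
  rw [abs_of_pos hR] at hz
  exact hle z (hball (sphere_subset_closedBall hz))

namespace IsSubharmonicOn

lemma const (a : ℝ) (Ω : Set ℂ) : IsSubharmonicOn (fun _ => a) Ω :=
  ⟨continuousOn_const, fun _ _ => Eventually.of_forall fun _ => (circleAverage_const a _ _).ge⟩

lemma of_harmonicOnNhd (hΩ : IsOpen Ω) (hv : HarmonicOnNhd v Ω) : IsSubharmonicOn v Ω := by
  refine ⟨hv.continuousOn, fun w hw => ?_⟩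
  filter_upwards [eventually_pos_and_closedBall_subset hΩ hw] with r ⟨hr, hball⟩
  rw [← abs_of_pos hr] at hball
  exact (hv.mono hball).circleAverage_eq.ge

lemma of_forall_mem_nhds (h : ∀ w ∈ Ω, ∃ U ∈ 𝓝 w, IsSubharmonicOn v U) : IsSubharmonicOn v Ω := by
  refine ⟨fun w hw => ?_, fun w hw => ?_⟩ <;> obtain ⟨U, hU, hv⟩ := h w hw
  · exact (hv.continuousOn.continuousAt hU).continuousWithinAt
  · exact hv.eventually_le_circleAverage w (mem_of_mem_nhds hU)

lemma mono (hv : IsSubharmonicOn v Ω) {U : Set ℂ} (hU : U ⊆ Ω) :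
    IsSubharmonicOn v U :=
  ⟨hv.continuousOn.mono hU, fun w hw => hv.eventually_le_circleAverage w (hU hw)⟩

lemma congr (hΩ : IsOpen Ω) (hv : IsSubharmonicOn v Ω) (h : EqOn u v Ω) :
    IsSubharmonicOn u Ω := by
  have hu := hv.continuousOn.congr h
  refine ⟨hu, fun w hw => ?_⟩
  filter_upwards [hv.eventually_le_circleAverage w hw, eventually_pos_and_closedBall_subset hΩ hw]
    with r hvr ⟨hr, hball⟩
  rw [h hw]
  exact hvr.trans (circleAverage_mono_of_closedBall_subset hv.continuousOn hu
    (fun z hz => (h hz).ge) hr hball)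

lemma sup (hΩ : IsOpen Ω) (hv : IsSubharmonicOn v Ω) (hu : IsSubharmonicOn u Ω) :
    IsSubharmonicOn (v ⊔ u) Ω := by
  have hvu := hv.continuousOn.sup hu.continuousOn
  refine ⟨hvu, fun w hw => ?_⟩
  filter_upwards [hv.eventually_le_circleAverage w hw, hu.eventually_le_circleAverage w hw,
    eventually_pos_and_closedBall_subset hΩ hw] with r hvr hur ⟨hr, hball⟩
  exact sup_le
    (hvr.trans (circleAverage_mono_of_closedBall_subset hv.continuousOn hvu
      (fun _ _ => le_sup_left) hr hball))
    (hur.trans (circleAverage_mono_of_closedBall_subset hu.continuousOn hvu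
      (fun _ _ => le_sup_right) hr hball))

lemma add (hΩ : IsOpen Ω) (hv : IsSubharmonicOn v Ω) (hu : IsSubharmonicOn u Ω) :
    IsSubharmonicOn (v + u) Ω := by
  refine ⟨hv.continuousOn.add hu.continuousOn, fun w hw => ?_⟩
  filter_upwards [hv.eventually_le_circleAverage w hw, hu.eventually_le_circleAverage w hw,
    eventually_pos_and_closedBall_subset hΩ hw] with r hvr hur ⟨hr, hball⟩
  rw [circleAverage_add (circleIntegrable_of_closedBall_subset hv.continuousOn hr hball)
    (circleIntegrable_of_closedBall_subset hu.continuousOn hr hball)]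
  exact add_le_add hvr hur

lemma const_smul (hv : IsSubharmonicOn v Ω) {a : ℝ} (ha : 0 ≤ a) :
    IsSubharmonicOn (a • v) Ω := by
  refine ⟨hv.continuousOn.const_smul a, fun w hw => ?_⟩
  filter_upwards [hv.eventually_le_circleAverage w hw] with r hvr
  rw [circleAverage_smul]
  exact mul_le_mul_of_nonneg_left hvr ha

end IsSubharmonicOn

lemma circleAverage_lt_of_forall_le_of_lt {m : ℝ} (hR : 0 < R) (hv : ContinuousOn v (sphere c R))
    (hle : ∀ z ∈ sphere c R, v z ≤ m) (hlt : v (c + R) < m) : circleAverage v c R < m := by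
  have hmem : ∀ θ, circleMap c R θ ∈ sphere c R := circleMap_mem_sphere c hR.le
  have hcont : Continuous fun θ => m - v (circleMap c R θ) :=
    continuous_const.sub (hv.comp_continuous (continuous_circleMap c R) hmem)
  have hint : 0 < ∫ θ in (0 : ℝ)..2 * π, (m - v (circleMap c R θ)) :=
    intervalIntegral.integral_pos two_pi_pos hcont.continuousOn
      (fun θ _ => sub_nonneg.2 (hle _ (hmem θ)))
      ⟨0, left_mem_Icc.2 two_pi_pos.le, by simpa [circleMap] using hlt⟩
  have havg : 0 < circleAverage (fun z => m - v z) c R :=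
    smul_pos (inv_pos.2 two_pi_pos) hint
  rw [circleAverage_fun_sub (circleIntegrable_const m c R) (hv.circleIntegrable hR.le),
    circleAverage_const] at havg
  exact sub_pos.1 havg

/- At the rightmost point of the set where `v` is maximal, the submean value inequality fails:
small circles around it leave that set. -/
lemma IsSubharmonicOn.le_of_forall_mem_frontier_le {K : Set ℂ} (hK : IsCompact K)
    (hv : IsSubharmonicOn v (interior K)) (hvK : ContinuousOn v K) {C : ℝ}
    (hC : ∀ z ∈ frontier K, v z ≤ C) : ∀ z ∈ K, v z ≤ C := by
  intro z₀ hz₀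
  by_contra! hCz₀
  obtain ⟨q, hqK, hq⟩ := hK.exists_isMaxOn ⟨z₀, hz₀⟩ hvK
  have hS : IsCompact (K ∩ v ⁻¹' {v q}) :=
    hK.of_isClosed_subset (hvK.preimage_isClosed_of_isClosed hK.isClosed isClosed_singleton)
      inter_subset_left
  obtain ⟨p, ⟨hpK, hpq : v p = v q⟩, hp⟩ := hS.exists_isMaxOn ⟨q, hqK, rfl⟩
    Complex.continuous_re.continuousOn
  have hCp : C < v p := hpq ▸ hCz₀.trans_le (hq hz₀)
  have hpint : p ∈ interior K := by
    by_contra hpint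
    exact hCp.not_ge (hC p ⟨subset_closure hpK, hpint⟩)
  obtain ⟨r, hle, hr, hball⟩ := ((hv.eventually_le_circleAverage p hpint).and
    (eventually_pos_and_closedBall_subset isOpen_interior hpint)).exists
  have hsphere : sphere p r ⊆ K := sphere_subset_closedBall.trans (hball.trans interior_subset)
  have hpr : p + r ∈ sphere p r := by simp [hr.le]
  have hlt : v (p + r) < v q := by
    refine (hq (hsphere hpr)).lt_of_ne fun heq => ?_
    have hre : (p + r).re ≤ p.re := hp ⟨hsphere hpr, heq⟩
    simp only [add_re, ofReal_re, add_le_iff_nonpos_right] at hre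
    exact hre.not_gt hr
  exact (circleAverage_lt_of_forall_le_of_lt hr (hvK.mono hsphere) (fun z hz => hq (hsphere hz))
    hlt).not_ge (hpq ▸ hle)

lemma IsSubharmonicOn.le_of_forall_notMem_compact_le (hΩ : IsOpen Ω) (hv : IsSubharmonicOn v Ω)
    {K : Set ℂ} (hK : IsCompact K) (hKΩ : K ⊆ Ω) {C : ℝ} (hC : ∀ z ∈ Ω, z ∉ K → v z ≤ C) :
    ∀ z ∈ Ω, v z ≤ C := by
  obtain ⟨L, hL, hKL, hLΩ⟩ := exists_compact_between hK hΩ hKΩ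
  intro z hz
  by_cases hzK : z ∈ K
  · exact (hv.mono (interior_subset.trans hLΩ)).le_of_forall_mem_frontier_le hL
      (hv.continuousOn.mono hLΩ)
      (fun y hy => hC y (hLΩ (hL.isClosed.frontier_subset hy)) fun hyK => hy.2 (hKL hyK))
      z (interior_subset (hKL hzK))
  · exact hC z hz hzK

end Subharmonic

section PoissonModification

variable {Ω : Set ℂ} {v : ℂ → ℝ} {c w : ℂ} {R : ℝ}

lemma continuousOn_piecewise_of_tendsto {X Y : Type*} [TopologicalSpace X] [TopologicalSpace Y]
    {s U : Set X} [∀ x, Decidable (x ∈ U)] (hU : IsOpen U) {f g : X → Y}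
    (hf : ContinuousOn f (s ∩ U)) (hg : ContinuousOn g s)
    (hfg : ∀ a ∈ s ∩ frontier U, Tendsto f (𝓝[s ∩ U] a) (𝓝 (g a))) :
    ContinuousOn (U.piecewise f g) s := by
  have hpw : ∀ a ∈ s ∩ frontier U, U.piecewise f g a = g a := fun a ha =>
    piecewise_eq_of_notMem _ _ _ fun haU => (hU.inter_frontier_eq ▸ ⟨haU, ha.2⟩ : a ∈ (∅ : Set X))
  refine ContinuousOn.piecewise' (fun a ha => ?_) (fun a ha => ?_) hf (hg.mono inter_subset_left)
  · rw [hpw a ha]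
    exact hfg a ha
  · rw [hpw a ha]
    exact (hg a ha.1).mono inter_subset_left

open Classical in
/-- The Poisson modification of `v` on the disc `ball c R`: the harmonic replacement of `v` in the
disc, and `v` itself outside. -/
noncomputable def poissonModification (v : ℂ → ℝ) (c : ℂ) (R : ℝ) : ℂ → ℝ :=
  (ball c R).piecewise (poissonIntegral v c R) v

lemma poissonModification_of_mem (hw : w ∈ ball c R) :
    poissonModification v c R w = poissonIntegral v c R w := by
  classical exact piecewise_eq_of_mem _ _ _ hw

lemma poissonModification_of_notMem (hw : w ∉ ball c R) : poissonModification v c R w = v w := by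
  classical exact piecewise_eq_of_notMem _ _ _ hw

lemma continuousOn_poissonModification (hv : ContinuousOn v Ω) (hball : closedBall c R ⊆ Ω) :
    ContinuousOn (poissonModification v c R) Ω := by
  have hvs := hv.mono (sphere_subset_closedBall.trans hball)
  classical
  refine continuousOn_piecewise_of_tendsto isOpen_ball
    ((harmonicOnNhd_poissonIntegral hvs).continuousOn.mono inter_subset_right) hv fun a ha => ?_
  exact (tendsto_poissonIntegral hvs (frontier_ball_subset_sphere ha.2)).mono_left
    (nhdsWithin_mono a inter_subset_right)

lemma harmonicContOnCl_poissonModification (hv : ContinuousOn v (closedBall c R)) :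
    HarmonicContOnCl (poissonModification v c R) (ball c R) := by
  refine ⟨fun z hz => ?_, (continuousOn_poissonModification hv subset_rfl).mono
    closure_ball_subset_closedBall⟩
  refine (harmonicAt_congr_nhds ?_).1
    (harmonicOnNhd_poissonIntegral (hv.mono sphere_subset_closedBall) z hz)
  filter_upwards [isOpen_ball.mem_nhds hz] with y hy using (poissonModification_of_mem hy).symm

lemma IsSubharmonicOn.le_poissonModification (hv : IsSubharmonicOn v Ω)
    (hball : closedBall c R ⊆ Ω) (z : ℂ) : v z ≤ poissonModification v c R z := by
  by_cases hz : z ∈ ball c R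
  swap
  · exact (poissonModification_of_notMem hz).ge
  have hR := (pos_of_mem_ball hz).ne'
  have hvb := hv.continuousOn.mono hball
  have hneg : HarmonicContOnCl (-poissonModification v c R) (ball c R) :=
    (harmonicContOnCl_poissonModification hvb).neg
  have hdiff : IsSubharmonicOn (v + -poissonModification v c R) (interior (closedBall c R)) := by
    rw [interior_closedBall c hR]
    exact (hv.mono (ball_subset_closedBall.trans hball)).add isOpen_ball
      (.of_harmonicOnNhd isOpen_ball hneg.harmonicOnNhd)
  have hle := hdiff.le_of_forall_mem_frontier_le (C := 0) (isCompact_closedBall c R)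
    (hvb.add hneg.continuousOn_ball) (fun y hy => ?_) z (ball_subset_closedBall hz)
  · simpa using hle
  · have hy : y ∉ ball c R := fun h => hy.2 (interior_closedBall c hR ▸ h)
    simp [poissonModification_of_notMem hy]

lemma IsSubharmonicOn.poissonModification (hΩ : IsOpen Ω) (hv : IsSubharmonicOn v Ω)
    (hball : closedBall c R ⊆ Ω) : IsSubharmonicOn (poissonModification v c R) Ω := by
  have hcont := continuousOn_poissonModification hv.continuousOn hball
  refine ⟨hcont, fun w hw => ?_⟩
  by_cases hwb : w ∈ ball c R
  · have hharm := harmonicContOnCl_poissonModification (hv.continuousOn.mono hball)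
    exact (of_harmonicOnNhd isOpen_ball hharm.harmonicOnNhd).eventually_le_circleAverage w hwb
  · filter_upwards [hv.eventually_le_circleAverage w hw, eventually_pos_and_closedBall_subset hΩ hw]
      with r hvr ⟨hr, hb⟩
    rw [poissonModification_of_notMem hwb]
    exact hvr.trans (circleAverage_mono_of_closedBall_subset hv.continuousOn hcont
      (fun z _ => hv.le_poissonModification hball z) hr hb)

end PoissonModification

section Perron

variable {Ω : Set ℂ} {f u v : ℂ → ℝ} {M : ℝ}

/-- Membership in the Perron family of `f` on `Ω`: continuous subharmonic functions that are at most
`f` near the boundary. "Near the boundary" means off a compact subset of `Ω`, so that no boundary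
values of `v` are needed and `Ω` may be unbounded. -/
structure IsPerronSubfunction (Ω : Set ℂ) (f v : ℂ → ℝ) : Prop where
  isSubharmonicOn : IsSubharmonicOn v Ω
  exists_isCompact : ∃ K, IsCompact K ∧ K ⊆ Ω ∧ ∀ z ∈ Ω, z ∉ K → v z ≤ f z

/-- The Perron solution of the Dirichlet problem on `Ω` with boundary values `f`: the upper envelope
of the Perron family. -/
noncomputable def perronSolution (Ω : Set ℂ) (f : ℂ → ℝ) (z : ℂ) : ℝ :=
  ⨆ v : {v // IsPerronSubfunction Ω f v}, v.1 z

namespace IsPerronSubfunction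

lemma of_forall_le (hv : IsSubharmonicOn v Ω) (hvf : ∀ z ∈ Ω, v z ≤ f z) :
    IsPerronSubfunction Ω f v :=
  ⟨hv, ∅, isCompact_empty, empty_subset _, fun z hz _ => hvf z hz⟩

lemma le_of_forall_le_add {H : ℂ → ℝ} {b : ℝ} (hΩ : IsOpen Ω) (hv : IsPerronSubfunction Ω f v)
    (hH : IsSubharmonicOn (-H) Ω) (hfH : ∀ z ∈ Ω, f z ≤ b + H z) : ∀ z ∈ Ω, v z ≤ b + H z := by
  obtain ⟨hvs, K, hK, hKΩ, hvf⟩ := hv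
  intro z hz
  have hle := (hvs.add hΩ hH).le_of_forall_notMem_compact_le hΩ hK hKΩ (C := b)
    (fun y hy hyK => by
      simpa only [Pi.add_apply, Pi.neg_apply, add_neg_le_iff_le_add] using
        (hvf y hy hyK).trans (hfH y hy)) z hz
  simpa only [Pi.add_apply, Pi.neg_apply, add_neg_le_iff_le_add] using hle

lemma sup (hΩ : IsOpen Ω) (hv : IsPerronSubfunction Ω f v) (hu : IsPerronSubfunction Ω f u) :
    IsPerronSubfunction Ω f (v ⊔ u) := by
  obtain ⟨hvs, K, hK, hKΩ, hvf⟩ := hv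
  obtain ⟨hus, L, hL, hLΩ, huf⟩ := hu
  refine ⟨hvs.sup hΩ hus, K ∪ L, hK.union hL, union_subset hKΩ hLΩ, fun z hz hzKL => ?_⟩
  rw [mem_union, not_or] at hzKL
  exact sup_le (hvf z hz hzKL.1) (huf z hz hzKL.2)

lemma poissonModification {c : ℂ} {R : ℝ} (hΩ : IsOpen Ω) (hv : IsPerronSubfunction Ω f v)
    (hball : closedBall c R ⊆ Ω) : IsPerronSubfunction Ω f (poissonModification v c R) := by
  obtain ⟨hvs, K, hK, hKΩ, hvf⟩ := hv
  refine ⟨hvs.poissonModification hΩ hball, K ∪ closedBall c R,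
    hK.union (isCompact_closedBall c R), union_subset hKΩ hball, fun z hz hzK => ?_⟩
  rw [mem_union, not_or] at hzK
  rw [poissonModification_of_notMem fun h => hzK.2 (ball_subset_closedBall h)]
  exact hvf z hz hzK.1

end IsPerronSubfunction

lemma isPerronSubfunction_const_neg (hM : ∀ z ∈ Ω, |f z| ≤ M) :
    IsPerronSubfunction Ω f fun _ => -M :=
  .of_forall_le (.const _ _) fun z hz => (abs_le.1 (hM z hz)).1

lemma IsPerronSubfunction.le_perronSolution (hΩ : IsOpen Ω) (hM : ∀ z ∈ Ω, |f z| ≤ M)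
    (hv : IsPerronSubfunction Ω f v) {z : ℂ} (hz : z ∈ Ω) : v z ≤ perronSolution Ω f z := by
  have hbdd : BddAbove (range fun u : {u // IsPerronSubfunction Ω f u} => u.1 z) := by
    refine ⟨M, forall_mem_range.2 fun u => ?_⟩
    simpa using u.2.le_of_forall_le_add (H := 0) (b := M) hΩ (by simpa using .const 0 Ω)
      (fun y hy => by simpa using (abs_le.1 (hM y hy)).2) z hz
  exact le_ciSup hbdd ⟨v, hv⟩

lemma perronSolution_le (hM : ∀ z ∈ Ω, |f z| ≤ M) {z : ℂ} {C : ℝ}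
    (h : ∀ v, IsPerronSubfunction Ω f v → v z ≤ C) : perronSolution Ω f z ≤ C :=
  have : Nonempty {v // IsPerronSubfunction Ω f v} := ⟨⟨_, isPerronSubfunction_const_neg hM⟩⟩
  ciSup_le fun v => h v.1 v.2

/- Choose `v` in the family almost attaining the supremum at the centre `c`. For any competitor `u`
the modification of `v ⊔ u` exceeds that of `v` by little at `c`, hence by little on the half disc
by Harnack's inequality. -/
lemma exists_harmonicContOnCl_abs_perronSolution_sub_le (hΩ : IsOpen Ω)
    (hM : ∀ z ∈ Ω, |f z| ≤ M) {c : ℂ} {R : ℝ} (hR : 0 < R) (hball : closedBall c R ⊆ Ω) {ε : ℝ}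
    (hε : 0 < ε) : ∃ v, HarmonicContOnCl v (ball c (R / 2)) ∧
      ∀ z ∈ closedBall c (R / 2), |perronSolution Ω f z - v z| ≤ ε := by
  have : Nonempty {v // IsPerronSubfunction Ω f v} := ⟨⟨_, isPerronSubfunction_const_neg hM⟩⟩
  obtain ⟨⟨v, hv⟩, hvc : _ < v c⟩ :=
    exists_lt_of_lt_ciSup (sub_lt_self (perronSolution Ω f c) (show 0 < ε / 3 by positivity))
  have hhalf : closedBall c (R / 2) ⊆ ball c R := closedBall_subset_ball (half_lt_self hR)
  have hvball := hv.isSubharmonicOn.continuousOn.mono hball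
  refine ⟨poissonModification v c R, (harmonicContOnCl_poissonModification hvball).mono
    (ball_subset_closedBall.trans hhalf), fun z hz => ?_⟩
  have hzΩ : z ∈ Ω := hball (ball_subset_closedBall (hhalf hz))
  have hle := (hv.poissonModification hΩ hball).le_perronSolution hΩ hM hzΩ
  rw [abs_of_nonneg (sub_nonneg.2 hle), sub_le_iff_le_add']
  refine perronSolution_le hM fun u hu => ?_
  have hvu := hv.sup hΩ hu
  have hcΩ : c ∈ Ω := hball (mem_closedBall_self hR.le)
  have hharnack := poissonIntegral_sub_le_three_mul hR (hvball.mono sphere_subset_closedBall)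
    ((hvu.isSubharmonicOn.continuousOn.mono hball).mono sphere_subset_closedBall)
    (fun _ _ => le_sup_left) hz
  simp only [← poissonModification_of_mem (hhalf hz),
    ← poissonModification_of_mem (mem_ball_self hR)] at hharnack
  have hvu_c := (hvu.poissonModification hΩ hball).le_perronSolution hΩ hM hcΩ
  have hv_c := hv.isSubharmonicOn.le_poissonModification hball c
  have hu_z : u z ≤ _ := le_sup_right.trans (hvu.isSubharmonicOn.le_poissonModification hball z)
  linarith

lemma harmonicOnNhd_perronSolution (hΩ : IsOpen Ω) (hM : ∀ z ∈ Ω, |f z| ≤ M) :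
    HarmonicOnNhd (perronSolution Ω f) Ω := by
  intro c hc
  obtain ⟨R, hR, hball⟩ := (eventually_pos_and_closedBall_subset hΩ hc).exists
  exact harmonicOnNhd_of_forall_exists_abs_sub_le
    (fun ε hε => exists_harmonicContOnCl_abs_perronSolution_sub_le hΩ hM hR hball hε)
    c (mem_ball_self (half_pos hR))

lemma abs_perronSolution_sub_le {H : ℂ → ℝ} {b : ℝ} (hΩ : IsOpen Ω) (hM : ∀ z ∈ Ω, |f z| ≤ M)
    (hH : IsSubharmonicOn (-H) Ω) (hfH : ∀ z ∈ Ω, |f z - b| ≤ H z) :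
    ∀ z ∈ Ω, |perronSolution Ω f z - b| ≤ H z := by
  intro z hz
  have hlower : IsPerronSubfunction Ω f ((fun _ => b) + -H) :=
    .of_forall_le ((IsSubharmonicOn.const b Ω).add hΩ hH) fun y hy => by
      have := (abs_le.1 (hfH y hy)).1
      simp only [Pi.add_apply, Pi.neg_apply]
      linarith
  have hupper : perronSolution Ω f z ≤ b + H z :=
    perronSolution_le hM fun v hv =>
      hv.le_of_forall_le_add hΩ hH (fun y hy => sub_le_iff_le_add'.1 (abs_le.1 (hfH y hy)).2) z hz
  have hle := hlower.le_perronSolution hΩ hM hz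
  simp only [Pi.add_apply, Pi.neg_apply] at hle
  exact abs_sub_le_iff.2 ⟨by linarith, by linarith⟩

/-- `Ω` has a barrier at `a`: at every scale `r` there is a nonnegative superharmonic function on
`Ω` that tends to `0` at `a` and is at least `1` off `ball a r`. -/
def HasBarrierAt (Ω : Set ℂ) (a : ℂ) : Prop :=
  ∀ r > 0, ∃ h : ℂ → ℝ, IsSubharmonicOn (-h) Ω ∧ (∀ z ∈ Ω, 0 ≤ h z) ∧
    (∀ z ∈ Ω, z ∉ ball a r → 1 ≤ h z) ∧ Tendsto h (𝓝[Ω] a) (𝓝 0)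

lemma HasBarrierAt.tendsto_perronSolution {a : ℂ} {b : ℝ} (hbar : HasBarrierAt Ω a)
    (hΩ : IsOpen Ω) (hM : ∀ z ∈ Ω, |f z| ≤ M) (hf : Tendsto f (𝓝[Ω] a) (𝓝 b)) :
    Tendsto (perronSolution Ω f) (𝓝[Ω] a) (𝓝 b) := by
  rw [Metric.tendsto_nhds]
  intro ε hε
  obtain ⟨r, hr, hfr⟩ := Metric.tendsto_nhdsWithin_nhds.1 hf (ε / 2) (half_pos hε)
  obtain ⟨h, hh, h_nonneg, h_one, h_lim⟩ := hbar r hr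
  set A := max M 0 + |b|
  have hA : 0 ≤ A := by positivity
  set H : ℂ → ℝ := fun z => ε / 2 + A * h z
  have hH : IsSubharmonicOn (-H) Ω :=
    ((IsSubharmonicOn.const (-(ε / 2)) Ω).add hΩ (hh.const_smul hA)).congr hΩ fun z _ => by
      simp [H, add_comm]
  have hfH : ∀ z ∈ Ω, |f z - b| ≤ H z := by
    intro z hz
    by_cases hzr : z ∈ ball a r
    · exact (hfr hz hzr).le.trans (le_add_of_nonneg_right (mul_nonneg hA (h_nonneg z hz)))
    · calc |f z - b| ≤ |f z| + |b| := abs_sub _ _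
        _ ≤ A := add_le_add ((hM z hz).trans (le_max_left _ _)) le_rfl
        _ ≤ A * h z := le_mul_of_one_le_right hA (h_one z hz hzr)
        _ ≤ H z := le_add_of_nonneg_left (half_pos hε).le
  have hHlim : Tendsto H (𝓝[Ω] a) (𝓝 (ε / 2)) := by
    simpa using (h_lim.const_mul A).const_add (ε / 2)
  filter_upwards [hHlim.eventually_lt_const (half_lt_self hε), self_mem_nhdsWithin] with z hzε hz
  exact (abs_perronSolution_sub_le hΩ hM hH hfH z hz).trans_lt hzε

end Perron

section DirichletProblem

lemma harmonicOnSet_of_harmonicOnNhd {U : Set ℂ} {f : ℂ → ℝ} (hf : HarmonicOnNhd f U) :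
    HarmonicOnSet f U := by
  refine ⟨fun z hz => (hf z hz).1.contDiffWithinAt, fun p hp => ?_⟩
  have hC2 : ContDiffAt ℝ 2 f p := (hf p hp).1
  have hd : DifferentiableAt ℝ (fderiv ℝ f) p :=
    (hC2.fderiv_right (m := 1) le_rfl).differentiableAt one_ne_zero
  have hsecond (v : ℂ) :
      fderiv ℝ (fun z => fderiv ℝ f z v) p v = fderiv ℝ (fderiv ℝ f) p v v := by
    rw [fderiv_clm_apply hd (differentiableAt_const v)]
    simp
  have hlap := congrFun (laplacian_eq_iteratedFDeriv_complexPlane f) p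
  rw [(hf p hp).2.self_of_nhds] at hlap
  simp only [iteratedFDeriv_two_apply] at hlap
  rw [hsecond, hsecond]
  simpa using hlap.symm

theorem exists_harmonicOnSet_eqOn_frontier_of_hasBarrierAt {Ω : Set ℂ} (hΩ : IsOpen Ω)
    (hbar : ∀ a ∈ frontier Ω, HasBarrierAt Ω a) {f : ℂ → ℝ} (hf : ContinuousOn f (closure Ω))
    {M : ℝ} (hM : ∀ z ∈ Ω, |f z| ≤ M) :
    ∃ u : ℂ → ℝ, ContinuousOn u (closure Ω) ∧ HarmonicOnSet u Ω ∧ EqOn u f (frontier Ω) := by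
  classical
  have hharm := harmonicOnNhd_perronSolution hΩ hM
  refine ⟨Ω.piecewise (perronSolution Ω f) f, ?_, ?_, fun a ha => ?_⟩
  · refine continuousOn_piecewise_of_tendsto hΩ (hharm.continuousOn.mono inter_subset_right) hf
      fun a ha => ?_
    rw [inter_eq_right.2 subset_closure]
    exact (hbar a ha.2).tendsto_perronSolution hΩ hM ((hf a ha.1).mono subset_closure)
  · refine harmonicOnSet_of_harmonicOnNhd fun z hz => (harmonicAt_congr_nhds ?_).1 (hharm z hz)
    filter_upwards [hΩ.mem_nhds hz] with y hy using (piecewise_eq_of_mem _ _ _ hy).symm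
  · exact piecewise_eq_of_notMem _ _ _ fun haΩ =>
      (hΩ.inter_frontier_eq ▸ ⟨haΩ, ha⟩ : a ∈ (∅ : Set ℂ))

end DirichletProblem

section HalfPlanePoissonIntegral

variable {μ : Measure ℝ} {ζ : ℂ}

lemma im_resolvent (ζ : ℂ) (t : ℝ) :
    (resolvent ζ t).im = ζ.im / ((t - ζ.re) ^ 2 + ζ.im ^ 2) := by
  rw [resolvent, Ring.inverse_eq_inv', inv_im, normSq_apply]
  simp [sq]

lemma notMem_image_algebraMap_of_im_pos (hζ : 0 < ζ.im) (s : Set ℝ) : ζ ∉ algebraMap ℝ ℂ '' s := by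
  rintro ⟨t, -, rfl⟩
  simp at hζ

lemma integrable_im_resolvent [IsFiniteMeasure μ] (hζ : 0 < ζ.im) :
    Integrable (fun t : ℝ => ζ.im / ((t - ζ.re) ^ 2 + ζ.im ^ 2)) μ := by
  simpa only [imCLM_apply, im_resolvent] using
    imCLM.integrable_comp (integrable_resolvent (notMem_image_algebraMap_of_im_pos hζ μ.support))

/-- Up to the customary factor `π⁻¹`, the right-hand side is the half-plane Poisson integral. -/
lemma im_resolventTransform [IsFiniteMeasure μ] (hζ : 0 < ζ.im) :
    (resolventTransform μ ζ).im = ∫ t : ℝ, ζ.im / ((t - ζ.re) ^ 2 + ζ.im ^ 2) ∂μ := by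
  rw [resolventTransform_apply, ← imCLM_apply, ← imCLM.integral_comp_comm
    (integrable_resolvent (notMem_image_algebraMap_of_im_pos hζ μ.support))]
  simp only [imCLM_apply, im_resolvent]

lemma im_resolventTransform_nonneg [IsFiniteMeasure μ] (hζ : 0 < ζ.im) :
    0 ≤ (resolventTransform μ ζ).im := by
  rw [im_resolventTransform hζ]
  exact integral_nonneg fun t => by positivity

lemma im_resolventTransform_le [IsFiniteMeasure μ] (hζ : 0 < ζ.im) :
    (resolventTransform μ ζ).im ≤ μ.real univ / ζ.im := by
  rw [im_resolventTransform hζ]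
  have hle (t : ℝ) : ζ.im / ((t - ζ.re) ^ 2 + ζ.im ^ 2) ≤ (ζ.im)⁻¹ := by
    calc ζ.im / ((t - ζ.re) ^ 2 + ζ.im ^ 2) ≤ ζ.im / ζ.im ^ 2 := by
          gcongr
          exact le_add_of_nonneg_left (sq_nonneg _)
      _ = (ζ.im)⁻¹ := by field_simp
  calc ∫ t : ℝ, ζ.im / ((t - ζ.re) ^ 2 + ζ.im ^ 2) ∂μ ≤ ∫ _, (ζ.im)⁻¹ ∂μ :=
        integral_mono (integrable_im_resolvent hζ) (integrable_const _) hle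
    _ = μ.real univ / ζ.im := by rw [integral_const, smul_eq_mul, div_eq_mul_inv]

lemma one_le_im_resolventTransform [IsFiniteMeasure μ] (hζ : 0 < ζ.im)
    (hμ : volume.restrict (Ioo (ζ.re - ζ.im) (ζ.re + ζ.im)) ≤ μ) :
    1 ≤ (resolventTransform μ ζ).im := by
  have hkernel : ∀ t ∈ Ioo (ζ.re - ζ.im) (ζ.re + ζ.im),
      (2 * ζ.im)⁻¹ ≤ ζ.im / ((t - ζ.re) ^ 2 + ζ.im ^ 2) := by
    rintro t ⟨ht₁, ht₂⟩
    have hsq : (t - ζ.re) ^ 2 ≤ ζ.im ^ 2 := sq_le_sq' (by linarith) (by linarith)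
    rw [inv_eq_one_div, div_le_div_iff₀ (by positivity) (by positivity)]
    linarith
  rw [im_resolventTransform hζ]
  calc (1 : ℝ) = ∫ _ in Ioo (ζ.re - ζ.im) (ζ.re + ζ.im), (2 * ζ.im)⁻¹ := by
        rw [setIntegral_const, Real.volume_real_Ioo_of_le (by linarith), smul_eq_mul]
        field_simp
        ring
    _ ≤ ∫ t in Ioo (ζ.re - ζ.im) (ζ.re + ζ.im), ζ.im / ((t - ζ.re) ^ 2 + ζ.im ^ 2) :=
        setIntegral_mono_on (integrable_const _) (integrable_im_resolvent hζ)
          measurableSet_Ioo hkernel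
    _ ≤ ∫ t : ℝ, ζ.im / ((t - ζ.re) ^ 2 + ζ.im ^ 2) ∂μ :=
        integral_mono_measure hμ (ae_of_all _ fun t => by positivity)
          (integrable_im_resolvent hζ)

lemma eventually_one_le_im_resolventTransform [IsFiniteMeasure μ] {E : Set ℝ} {x : ℝ}
    (hE : E ∈ 𝓝 x) (hμ : volume.restrict E ≤ μ) :
    ∀ᶠ ζ : ℂ in 𝓝 (x : ℂ), 0 < ζ.im → 1 ≤ (resolventTransform μ ζ).im := by
  obtain ⟨δ, hδ, hball⟩ := Metric.mem_nhds_iff.1 hE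
  have hre : Tendsto (fun ζ : ℂ => |ζ.re - x| + |ζ.im|) (𝓝 (x : ℂ)) (𝓝 0) := by
    have : Continuous fun ζ : ℂ => |ζ.re - x| + |ζ.im| := by fun_prop
    simpa using this.tendsto (x : ℂ)
  filter_upwards [hre.eventually_lt_const hδ] with ζ hζδ hζ
  refine one_le_im_resolventTransform hζ (le_trans (Measure.restrict_mono_set _ ?_) hμ)
  rintro t ⟨ht₁, ht₂⟩
  refine hball (mem_ball_iff_norm.2 (abs_lt.2 ⟨?_, ?_⟩)) <;>
    linarith [neg_le_abs (ζ.re - x), le_abs_self (ζ.re - x), le_abs_self ζ.im]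

end HalfPlanePoissonIntegral

section AngularCoordinate

lemma volume_le_of_injOn_coe_addCircle {E : Set ℝ} (hE : NullMeasurableSet E) {T : ℝ} (hT : 0 < T)
    (hinj : InjOn ((↑) : ℝ → AddCircle T) E) : volume E ≤ ENNReal.ofReal T := by
  by_contra! hlt
  have hIoc : volume (Ioc (0 : ℝ) (0 + T)) < volume E := by simpa using hlt
  obtain ⟨x, hx, y, hy, g, hg, hxy⟩ :=
    (isAddFundamentalDomain_Ioc hT 0).exists_ne_zero_vadd_eq hE hIoc
  have hgxy : (g : ℝ) + x = y := hxy
  refine hg (Subtype.ext ?_)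
  have hcoe : (x : AddCircle T) = y := by
    rw [← hgxy, AddCircle.coe_add, (QuotientAddGroup.eq_zero_iff _).2 g.2, zero_add]
  simpa [hinj hx hy hcoe] using hgxy

/-- `w` is a branch on `Ω` of `z ↦ -I * log ((z - a) / r)`, with open image. It maps
`Ω ∩ ball a r` into the upper half-plane and `Ω ∩ sphere a r` into the real line. -/
structure IsAngularCoordinate (w : ℂ → ℂ) (Ω : Set ℂ) (a : ℂ) (r : ℝ) : Prop where
  differentiableOn : DifferentiableOn ℂ w Ω
  isOpen_image : IsOpen (w '' Ω)
  add_mul_exp_eq : ∀ z ∈ Ω, a + r * Complex.exp (I * w z) = z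

lemma exists_isAngularCoordinate {Ω : Set ℂ} (hΩ : IsOpen Ω) (hsc : IsSimplyConnected Ω) {a : ℂ}
    (ha : a ∉ Ω) {r : ℝ} (hr : 0 < r) : ∃ w, IsAngularCoordinate w Ω a r := by
  have hrC : (r : ℂ) ≠ 0 := ofReal_ne_zero.2 hr.ne'
  obtain ⟨l, hl, hexp⟩ := Complex.exists_continuousOn_eqOn_exp_comp hsc hΩ
    (g := fun z => (z - a) / r) (by fun_prop) (by
      rintro ⟨z, hz, hza⟩
      exact ha (sub_eq_zero.1 ((div_eq_zero_iff.1 hza).resolve_right hrC) ▸ hz))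
  set w : ℂ → ℂ := fun z => -I * l z
  have hleft : ∀ z ∈ Ω, a + r * Complex.exp (I * w z) = z := by
    intro z hz
    have hz' : Complex.exp (l z) = (z - a) / r := hexp hz
    simp only [w, ← mul_assoc, mul_neg, I_mul_I, neg_neg, one_mul, hz', mul_div_cancel₀ _ hrC,
      add_sub_cancel]
  have hderiv : ∀ z ∈ Ω, ∃ w' ≠ 0, HasStrictDerivAt w w' z := by
    intro z hz
    have hF : HasStrictDerivAt (fun ζ => a + r * Complex.exp (I * ζ))
        (r * (Complex.exp (I * w z) * (I * 1))) (w z) :=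
      ((((hasStrictDerivAt_id _).const_mul I).cexp).const_mul _).const_add a
    have hF' : r * (Complex.exp (I * w z) * (I * 1)) ≠ 0 := by
      simp [hrC, Complex.exp_ne_zero]
    refine ⟨_, inv_ne_zero hF', hF.of_local_left_inverse ?_ hF' ?_⟩
    · exact ((hl.const_smul (-I)).continuousAt (hΩ.mem_nhds hz))
    · filter_upwards [hΩ.mem_nhds hz] with y hy using hleft y hy
  refine ⟨w, fun z hz => ?_, isOpen_iff_mem_nhds.2 ?_, hleft⟩
  · obtain ⟨w', -, hw'⟩ := hderiv z hz
    exact hw'.hasDerivAt.differentiableAt.differentiableWithinAt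
  · rintro _ ⟨z, hz, rfl⟩
    obtain ⟨w', hw'_ne, hw'⟩ := hderiv z hz
    exact hw'.map_nhds_eq hw'_ne ▸ image_mem_map (hΩ.mem_nhds hz)

namespace IsAngularCoordinate

variable {Ω : Set ℂ} {w : ℂ → ℂ} {a z : ℂ} {r : ℝ}

lemma norm_sub_eq (hw : IsAngularCoordinate w Ω a r) (hr : 0 ≤ r) (hz : z ∈ Ω) :
    ‖z - a‖ = r * Real.exp (-(w z).im) := by
  conv_lhs => rw [← hw.add_mul_exp_eq z hz]
  simp [Complex.norm_exp, abs_of_nonneg hr]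

lemma im_pos_iff (hw : IsAngularCoordinate w Ω a r) (hr : 0 < r) (hz : z ∈ Ω) :
    0 < (w z).im ↔ z ∈ ball a r := by
  rw [mem_ball, dist_eq_norm, hw.norm_sub_eq hr.le hz, mul_lt_iff_lt_one_right hr,
    Real.exp_lt_one_iff, neg_lt_zero]

lemma tendsto_im_atTop (hw : IsAngularCoordinate w Ω a r) (hr : 0 < r) (ha : a ∉ Ω) :
    Tendsto (fun z => (w z).im) (𝓝[Ω] a) atTop := by
  have hsub : Tendsto (fun z => ‖z - a‖ / r) (𝓝[Ω] a) (𝓝[>] 0) := by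
    refine tendsto_nhdsWithin_iff.2 ⟨?_, ?_⟩
    · have : Continuous fun z => ‖z - a‖ / r := by fun_prop
      simpa using (this.tendsto a).mono_left nhdsWithin_le_nhds
    · filter_upwards [self_mem_nhdsWithin] with z hz
      exact div_pos (norm_pos_iff.2 (sub_ne_zero.2 (ne_of_mem_of_not_mem hz ha))) hr
  refine (tendsto_neg_atBot_atTop.comp (Real.tendsto_log_nhdsGT_zero.comp hsub)).congr' ?_
  filter_upwards [self_mem_nhdsWithin] with z hz
  simp only [Function.comp_apply]
  rw [hw.norm_sub_eq hr.le hz, mul_div_cancel_left₀ _ hr.ne', Real.log_exp, neg_neg]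

lemma isOpen_setOf_ofReal_mem_image (hw : IsAngularCoordinate w Ω a r) :
    IsOpen {t : ℝ | (t : ℂ) ∈ w '' Ω} :=
  hw.isOpen_image.preimage continuous_ofReal

lemma volume_setOf_ofReal_mem_image_le (hw : IsAngularCoordinate w Ω a r) :
    volume {t : ℝ | (t : ℂ) ∈ w '' Ω} ≤ ENNReal.ofReal (2 * π) := by
  refine volume_le_of_injOn_coe_addCircle
    hw.isOpen_setOf_ofReal_mem_image.measurableSet.nullMeasurableSet two_pi_pos ?_
  rintro s ⟨y, hy, hys⟩ t ⟨z, hz, hzt⟩ (hst : (s : Real.Angle) = t)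
  have hexp : Complex.exp (I * s) = Complex.exp (I * t) := by
    simpa only [Real.Angle.toCircle_coe, Circle.coe_exp, mul_comm I] using
      congrArg (fun θ : Real.Angle => (θ.toCircle : ℂ)) hst
  have hyz : y = z := by
    rw [← hw.add_mul_exp_eq y hy, ← hw.add_mul_exp_eq z hz, hys, hzt, hexp]
  exact ofReal_injective (by rw [← hys, ← hzt, hyz])

end IsAngularCoordinate

end AngularCoordinate

section Barrier

variable {Ω : Set ℂ} {w : ℂ → ℂ} {a z : ℂ} {r : ℝ}

/-- The potential of an angular coordinate `w` on `Ω`: `π` times the harmonic measure, in the upper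
half-plane, of the set of real values of `w`, pulled back by `w`. -/
noncomputable def angularPotential (w : ℂ → ℂ) (Ω : Set ℂ) (z : ℂ) : ℝ :=
  (resolventTransform (volume.restrict {t : ℝ | (t : ℂ) ∈ w '' Ω}) (w z)).im

namespace IsAngularCoordinate

lemma isFiniteMeasure_restrict_setOf (hw : IsAngularCoordinate w Ω a r) :
    IsFiniteMeasure (volume.restrict {t : ℝ | (t : ℂ) ∈ w '' Ω}) :=
  isFiniteMeasure_restrict.2
    (ne_top_of_le_ne_top ENNReal.ofReal_ne_top hw.volume_setOf_ofReal_mem_image_le)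

lemma harmonicOnNhd_angularPotential (hw : IsAngularCoordinate w Ω a r) (hΩ : IsOpen Ω)
    (hr : 0 < r) : HarmonicOnNhd (angularPotential w Ω) (Ω ∩ ball a r) := by
  have := hw.isFiniteMeasure_restrict_setOf
  have hdiff : DifferentiableOn ℂ
      (fun z => resolventTransform (volume.restrict {t : ℝ | (t : ℂ) ∈ w '' Ω}) (w z))
      (Ω ∩ ball a r) := fun z ⟨hz, hzr⟩ =>
    ((hasDerivAt_resolventTransform (w z) (notMem_image_algebraMap_of_im_pos
      ((hw.im_pos_iff hr hz).2 hzr) _)).differentiableAt.comp z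
      (hw.differentiableOn.differentiableAt (hΩ.mem_nhds hz))).differentiableWithinAt
  exact fun z hz => (hdiff.analyticAt ((hΩ.inter isOpen_ball).mem_nhds hz)).harmonicAt_im

lemma angularPotential_nonneg (hw : IsAngularCoordinate w Ω a r) (hr : 0 < r) (hz : z ∈ Ω)
    (hzr : z ∈ ball a r) : 0 ≤ angularPotential w Ω z :=
  have := hw.isFiniteMeasure_restrict_setOf
  im_resolventTransform_nonneg ((hw.im_pos_iff hr hz).2 hzr)

lemma tendsto_angularPotential (hw : IsAngularCoordinate w Ω a r) (hr : 0 < r) (ha : a ∉ Ω) :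
    Tendsto (angularPotential w Ω) (𝓝[Ω] a) (𝓝 0) := by
  have := hw.isFiniteMeasure_restrict_setOf
  have him := hw.tendsto_im_atTop hr ha
  refine tendsto_of_tendsto_of_tendsto_of_le_of_le' tendsto_const_nhds
    (him.const_div_atTop ((volume.restrict {t : ℝ | (t : ℂ) ∈ w '' Ω}).real univ)) ?_ ?_
  · filter_upwards [him.eventually_gt_atTop 0] with z hz using im_resolventTransform_nonneg hz
  · filter_upwards [him.eventually_gt_atTop 0] with z hz using im_resolventTransform_le hz

lemma eventually_one_le_angularPotential (hw : IsAngularCoordinate w Ω a r) (hΩ : IsOpen Ω)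
    (hr : 0 < r) (hz : z ∈ Ω) (hzr : z ∉ ball a r) :
    ∀ᶠ y in 𝓝 z, y ∈ ball a r → 1 ≤ angularPotential w Ω y := by
  have := hw.isFiniteMeasure_restrict_setOf
  have hwz : Tendsto w (𝓝 z) (𝓝 (w z)) :=
    (hw.differentiableOn.differentiableAt (hΩ.mem_nhds hz)).continuousAt
  have him : (w z).im ≤ 0 := not_lt.1 (mt (hw.im_pos_iff hr hz).1 hzr)
  rcases him.lt_or_eq with him | him
  · have hneg := ((continuous_im.tendsto _).comp hwz).eventually_lt_const him
    filter_upwards [hΩ.mem_nhds hz, hneg] with y hy hyneg hyr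
    exact absurd ((hw.im_pos_iff hr hy).2 hyr) hyneg.le.not_gt
  · have hreal : ((w z).re : ℂ) = w z := Complex.ext (ofReal_re _) ((ofReal_im _).trans him.symm)
    have hE : {t : ℝ | (t : ℂ) ∈ w '' Ω} ∈ 𝓝 (w z).re :=
      hw.isOpen_setOf_ofReal_mem_image.mem_nhds ⟨z, hz, hreal.symm⟩
    have hone := eventually_one_le_im_resolventTransform hE le_rfl
    rw [hreal] at hone
    filter_upwards [hΩ.mem_nhds hz, hwz.eventually hone] with y hy hyone hyr
    exact hyone ((hw.im_pos_iff hr hy).2 hyr)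

end IsAngularCoordinate

theorem hasBarrierAt_of_isSimplyConnected (hΩ : IsOpen Ω) (hsc : IsSimplyConnected Ω)
    (ha : a ∉ Ω) : HasBarrierAt Ω a := by
  classical
  intro r hr
  obtain ⟨w, hw⟩ := exists_isAngularCoordinate hΩ hsc ha hr
  set h : ℂ → ℝ := (ball a r).piecewise (angularPotential w Ω ⊓ 1) 1
  have h_of_mem : ∀ z ∈ ball a r, h z = min (angularPotential w Ω z) 1 := fun z hz =>
    piecewise_eq_of_mem _ _ _ hz
  have h_of_notMem : ∀ z ∉ ball a r, h z = 1 := fun z hz => piecewise_eq_of_notMem _ _ _ hz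
  refine ⟨h, .of_forall_mem_nhds fun z hz => ?_, fun z hz => ?_,
    fun z _ hzr => (h_of_notMem z hzr).ge, ?_⟩
  · by_cases hzr : z ∈ ball a r
    · have hU : IsOpen (Ω ∩ ball a r) := hΩ.inter isOpen_ball
      refine ⟨Ω ∩ ball a r, hU.mem_nhds ⟨hz, hzr⟩, ?_⟩
      refine ((IsSubharmonicOn.of_harmonicOnNhd hU
        (hw.harmonicOnNhd_angularPotential hΩ hr).neg).sup hU (.const (-1) _)).congr hU ?_
      intro y hy
      simp [h_of_mem y hy.2, max_neg_neg]
    · obtain ⟨U, hU, hUo, hzU⟩ := _root_.eventually_nhds_iff.1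
        (hw.eventually_one_le_angularPotential hΩ hr hz hzr)
      refine ⟨U, hUo.mem_nhds hzU, (IsSubharmonicOn.const (-1) U).congr hUo fun y hy => ?_⟩
      by_cases hyr : y ∈ ball a r
      · simp [h_of_mem y hyr, hU y hy hyr]
      · simp [h_of_notMem y hyr]
  · by_cases hzr : z ∈ ball a r
    · exact h_of_mem z hzr ▸ le_min (hw.angularPotential_nonneg hr hz hzr) zero_le_one
    · exact h_of_notMem z hzr ▸ zero_le_one
  · have hmin := (hw.tendsto_angularPotential hr ha).min (tendsto_const_nhds (x := (1 : ℝ)))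
    rw [min_eq_left zero_le_one] at hmin
    refine hmin.congr' ?_
    filter_upwards [mem_nhdsWithin_of_mem_nhds (ball_mem_nhds a hr)] with z hz
    exact (h_of_mem z hz).symm

end Barrier

lemma exists_boundedContinuousFunction_comp_eqOn {X Y : Type*} [TopologicalSpace X]
    [TopologicalSpace Y] [NormalSpace Y] [T2Space Y] {s : Set X} (hs : IsCompact s) {γ : X → Y}
    (hγ : ContinuousOn γ s) (hinj : InjOn γ s) {φ : X → ℝ} (hφ : ContinuousOn φ s) :
    ∃ f : BoundedContinuousFunction Y ℝ, EqOn (f ∘ γ) φ s := by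
  have : CompactSpace s := isCompact_iff_compactSpace.1 hs
  have hemb : IsClosedEmbedding (s.domRestrict γ) :=
    (continuousOn_iff_continuous_domRestrict.1 hγ).isClosedEmbedding (injOn_iff_injective.1 hinj)
  obtain ⟨f, -, hf⟩ := BoundedContinuousFunction.exists_extension_norm_eq_of_isClosedEmbedding
    (.mkOfCompact ⟨s.domRestrict φ, continuousOn_iff_continuous_domRestrict.1 hφ⟩) hemb
  exact ⟨f, fun x hx => congrFun hf ⟨x, hx⟩⟩

theorem exists_harmonicOnSet_eqOn_comp {Ω : Set ℂ} (hΩ : IsOpen Ω) (hsc : IsSimplyConnected Ω)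
    {X : Type*} [TopologicalSpace X] {s : Set X} (hs : IsCompact s) {γ : X → ℂ}
    (hγ : ContinuousOn γ s) (hinj : InjOn γ s) (hmaps : MapsTo γ s (frontier Ω)) {φ : X → ℝ}
    (hφ : ContinuousOn φ s) :
    ∃ u : ℂ → ℝ, ContinuousOn u (closure Ω) ∧ HarmonicOnSet u Ω ∧ EqOn (u ∘ γ) φ s := by
  obtain ⟨f, hf⟩ := exists_boundedContinuousFunction_comp_eqOn hs hγ hinj hφ
  obtain ⟨u, hu, hharm, huf⟩ := exists_harmonicOnSet_eqOn_frontier_of_hasBarrierAt hΩ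
    (fun a ha => hasBarrierAt_of_isSimplyConnected hΩ hsc (hΩ.frontier_eq ▸ ha).2)
    f.continuous.continuousOn fun z _ => f.norm_coe_le_norm z
  exact ⟨u, hu, hharm, fun x hx => (huf (hmaps hx)).trans (hf hx)⟩

end

theorem stmt_0_general (Ω : Set ℂ) (hΩo : IsOpen Ω) (hΩsc : SimplyConnectedSpace Ω)
    (γ : ℂ → ℂ) (hγinj : Set.InjOn γ (Metric.sphere (0 : ℂ) 1))
    (hγc : ContinuousOn γ (Metric.sphere (0 : ℂ) 1))
    (hΓ : Set.MapsTo γ (Metric.sphere (0 : ℂ) 1) (frontier Ω)) :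
    ∃ ξ η : ℂ → ℝ,
      ContinuousOn ξ (closure Ω) ∧ ContinuousOn η (closure Ω) ∧
      HarmonicOnSet ξ Ω ∧ HarmonicOnSet η Ω ∧
      (∀ θ ∈ Set.Ico (0 : ℝ) (2 * Real.pi),
        ξ (γ (Complex.exp (θ * Complex.I))) = Real.cos θ) ∧
      (∀ θ ∈ Set.Ico (0 : ℝ) (2 * Real.pi),
        η (γ (Complex.exp (θ * Complex.I))) = Real.sin θ) ∧
      (∀ z ∈ Metric.sphere (0 : ℂ) 1,
        (ξ (γ z) : ℂ) + (η (γ z) : ℂ) * Complex.I = z) := by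
  obtain ⟨ξ, hξc, hξ, hξre⟩ := exists_harmonicOnSet_eqOn_comp hΩo hΩsc (isCompact_sphere 0 1)
    hγc hγinj hΓ continuous_re.continuousOn
  obtain ⟨η, hηc, hη, hηim⟩ := exists_harmonicOnSet_eqOn_comp hΩo hΩsc (isCompact_sphere 0 1)
    hγc hγinj hΓ continuous_im.continuousOn
  have hexp (θ : ℝ) : Complex.exp (θ * Complex.I) ∈ sphere (0 : ℂ) 1 :=
    mem_sphere_zero_iff_norm.2 (norm_exp_ofReal_mul_I θ)
  refine ⟨ξ, η, hξc, hηc, hξ, hη, fun θ _ => ?_, fun θ _ => ?_, fun z hz => ?_⟩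
  · exact (hξre (hexp θ)).trans (exp_ofReal_mul_I_re θ)
  · exact (hηim (hexp θ)).trans (exp_ofReal_mul_I_im θ)
  · have hξz : ξ (γ z) = z.re := hξre hz
    have hηz : η (γ z) = z.im := hηim hz
    rw [hξz, hηz, re_add_im]

theorem stmt_0 (Ω : Set ℂ) (hΩo : IsOpen Ω) (hΩb : Bornology.IsBounded Ω)
    (hΩsc : SimplyConnectedSpace Ω)
    (γ : ℂ → ℂ) (hγinj : Set.InjOn γ (Metric.sphere (0 : ℂ) 1))
    (hγC2 : ContDiffOn ℝ 2 γ (Metric.sphere (0 : ℂ) 1))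
    (hΓ : frontier Ω = γ '' Metric.sphere (0 : ℂ) 1) :
    ∃ ξ η : ℂ → ℝ,
      ContinuousOn ξ (closure Ω) ∧ ContinuousOn η (closure Ω) ∧
      HarmonicOnSet ξ Ω ∧ HarmonicOnSet η Ω ∧
      (∀ θ ∈ Set.Ico (0 : ℝ) (2 * Real.pi),
        ξ (γ (Complex.exp (θ * Complex.I))) = Real.cos θ) ∧
      (∀ θ ∈ Set.Ico (0 : ℝ) (2 * Real.pi),
        η (γ (Complex.exp (θ * Complex.I))) = Real.sin θ) ∧
      (∀ z ∈ Metric.sphere (0 : ℂ) 1,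
        (ξ (γ z) : ℂ) + (η (γ z) : ℂ) * Complex.I = z) :=
  stmt_0_general Ω hΩo hΩsc γ hγinj hγC2.continuousOn (Set.mapsTo_iff_image_subset.2 hΓ.ge)
end

section
/- Let Ω ⊂ ℂ be a bounded, open, simply connected set whose frontier Γ = ∂Ω equals the image of an injective, twice continuously differentiable map γ : S¹ → ℂ from the unit circle, and let g = ξ + iη : closure(Ω) → ℂ be continuous on closure(Ω), with ξ, η harmonic on Ω, satisfying g(γ(z)) = z for all z ∈ S¹. Then the restriction of g to Ω is a C² diffeomorphism from Ω onto the open unit disk D = {z ∈ ℂ : |z| < 1}: g is twice continuously differentiable on Ω, injective on Ω, g(Ω) = D, and the inverse map g⁻¹ : D → Ω is twice continuously differentiable. -/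
open Complex Metric Set

/-!
Let `ℓ` be a nonzero real-linear functional on `ℂ`. If the differential of the harmonic function
`h = ℓ ∘ g` vanished at `p ∈ Ω`, then `h - h p` would be, up to a higher-order error, the real part
of `a (z - p) ^ k` with `k ≥ 2`, and would thus take positive and negative values on alternating
rays at `p`. By the maximum principle each connected component of `{h > h p}` or `{h < h p}`
meeting `Ω` reaches the boundary, where either set is an arc because `g` inverts `γ` there. So all
positive rays lie in one connected set and all negative rays in another, disjoint one. Separation
in the plane makes this impossible: joining the tips of the two positive rays would enclose the
tip of one of the negative rays. This is the Radó-Kneser-Choquet argument.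

Therefore `g` is a local diffeomorphism on `Ω`. It maps `Ω` properly into the disk, so it is a
covering of a simply connected space by a connected one, that is, a bijection.
-/

open Filter Function InnerProductSpace Topology
open scoped ComplexConjugate

theorem exists_continuousOn_exp_eq_div {B Y : Set ℂ} (hBo : IsOpen B) (hBc : IsPreconnected B)
    (hBY : Disjoint B Y) {a b : ℂ} (ha : a ∈ B) (hb : b ∈ B) :
    ∃ L : ℂ → ℂ, ContinuousOn L Y ∧ ∀ z ∈ Y, exp (L z) = (z - a) / (z - b) := by
  have sub_ne : ∀ x ∈ B, ∀ z ∈ Y, z - x ≠ 0 := fun x hx z hz =>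
    sub_ne_zero.2 (hBY.symm.ne_of_mem hz hx)
  refine hBc.induction₂ (fun a b => ∃ L : ℂ → ℂ, ContinuousOn L Y ∧
    ∀ z ∈ Y, exp (L z) = (z - a) / (z - b)) (fun x hx => ?near) ?trans ?symm ha hb
  case near =>
    obtain ⟨δ, hδ, hball⟩ := Metric.isOpen_iff.1 hBo x hx
    filter_upwards [mem_nhdsWithin_of_mem_nhds (ball_mem_nhds x (half_pos hδ)),
      self_mem_nhdsWithin] with y hyx hyB
    have mem_slit : ∀ z ∈ Y, (z - x) / (z - y) ∈ slitPlane := by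
      intro z hz
      have dist_zx : δ ≤ dist z x := not_lt.1 fun hlt => hBY.ne_of_mem (hball hlt) hz rfl
      have dist_zy : dist y x < dist z y := by
        linarith [dist_triangle z y x, mem_ball.1 hyx]
      have eq_one_add : (z - x) / (z - y) = 1 + (y - x) / (z - y) := by
        field_simp [sub_ne y hyB z hz]
        ring
      rw [eq_one_add]
      refine mem_slitPlane_of_norm_lt_one ?_
      rwa [norm_div, ← dist_eq_norm, ← dist_eq_norm, div_lt_one (dist_nonneg.trans_lt dist_zy)]
    refine ⟨fun z => log ((z - x) / (z - y)), ContinuousOn.clog ?_ mem_slit, fun z hz =>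
      exp_log (slitPlane_ne_zero (mem_slit z hz))⟩
    exact ContinuousOn.div (by fun_prop) (by fun_prop) (sub_ne y hyB)
  case trans =>
    rintro x y w - hy - ⟨L₁, hL₁, exp_L₁⟩ ⟨L₂, hL₂, exp_L₂⟩
    refine ⟨fun z => L₁ z + L₂ z, hL₁.add hL₂, fun z hz => ?_⟩
    rw [exp_add, exp_L₁ z hz, exp_L₂ z hz, div_mul_div_cancel₀ (sub_ne y hy z hz)]
  case symm =>
    rintro x y - - ⟨L, hL, exp_L⟩
    exact ⟨fun z => -L z, hL.neg, fun z hz => by rw [exp_neg, exp_L z hz, inv_div]⟩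

theorem div_sub_mem_slitPlane {a b z : ℂ} (hz : z ∉ segment ℝ a b) :
    (z - a) / (z - b) ∈ slitPlane := by
  have hzb : z - b ≠ 0 := sub_ne_zero.2 fun h => hz (h ▸ right_mem_segment ℝ a b)
  rw [mem_slitPlane_iff_not_le_zero]
  intro hq
  obtain ⟨s, hs⟩ : ∃ s : ℝ, (s : ℂ) = (z - a) / (z - b) :=
    ⟨_, Complex.ext rfl (Complex.le_def.1 hq).2.symm⟩
  have s_nonpos : s ≤ 0 := by simpa [← hs] using (Complex.le_def.1 hq).1
  have hs1 : (1 - s : ℂ) ≠ 0 := by exact_mod_cast (by linarith : 1 - s ≠ 0)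
  refine hz ⟨(1 - s)⁻¹, -s * (1 - s)⁻¹, inv_nonneg.2 (by linarith),
    mul_nonneg (by linarith) (inv_nonneg.2 (by linarith)), ?_, ?_⟩
  · rw [← one_add_mul, ← sub_eq_add_neg, mul_inv_cancel₀ (by linarith)]
  · rw [eq_div_iff hzb] at hs
    simp only [real_smul]
    push_cast
    field_simp
    linear_combination hs

/-- The fraction runs through the unit circle and passes `-1` at `t = 0`, where the principal
argument jumps from `-π` to `π`. -/
theorem not_tendsto_log_sub_I_div_add_I (l : ℂ) :
    ¬ Tendsto (fun t : ℝ => log ((t - I) / (t + I))) (𝓝[≠] 0) (𝓝 l) := by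
  intro h
  have hI : ∀ t : ℝ, (t + I : ℂ) ≠ 0 := fun t ht => by simpa using congrArg im ht
  have exp_l : exp l = -1 := by
    have hcont : Continuous fun t : ℝ => ((t : ℂ) - I) / (t + I) :=
      Continuous.div (by fun_prop) (by fun_prop) hI
    refine tendsto_nhds_unique (h.cexp.congr fun t => exp_log (div_ne_zero ?_ (hI t)))
      (tendsto_nhdsWithin_of_tendsto_nhds (by simpa using hcont.tendsto 0))
    exact fun ht => by simpa using congrArg im ht
  have conj_log : ∀ᶠ t : ℝ in 𝓝[≠] 0,
      log (((-t : ℝ) - I) / ((-t : ℝ) + I)) = conj (log ((t - I) / (t + I))) := by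
    filter_upwards [self_mem_nhdsWithin] with t ht
    have notMem_segment : (t : ℂ) ∉ segment ℝ I (-I) := by
      rintro ⟨a, b, -, -, -, hab⟩
      exact ht (by simpa using congrArg re hab.symm)
    have mem_slit : ((t : ℂ) - I) / (t + I) ∈ slitPlane := by
      simpa only [sub_neg_eq_add] using div_sub_mem_slitPlane notMem_segment
    rw [← log_conj _ (mem_slitPlane_iff_arg.1 mem_slit).1, map_div₀, ← neg_div_neg_eq]
    simp [add_comm, sub_eq_add_neg]
  have tendsto_neg : Tendsto (fun t : ℝ => -t) (𝓝[≠] 0) (𝓝[≠] 0) :=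
    tendsto_nhdsWithin_iff.2 ⟨tendsto_nhdsWithin_of_tendsto_nhds
      (by simpa using (continuous_neg (G := ℝ)).tendsto 0),
      eventually_mem_nhdsWithin.mono fun t ht => neg_ne_zero.2 ht⟩
  have l_real : conj l = l := tendsto_nhds_unique
    ((continuous_conj.tendsto l).comp h |>.congr' (conj_log.mono fun t ht => ht.symm))
    (h.comp tendsto_neg)
  obtain ⟨v, rfl⟩ := conj_eq_iff_real.1 l_real
  have exp_v : Real.exp v = -1 := by exact_mod_cast exp_l
  linarith [Real.exp_pos v]

theorem exists_eqOn_sub_of_exp_eqOn {X : Type*} [TopologicalSpace X] {Z : Set X}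
    (hZ : IsPreconnected Z) {L₁ L₂ : X → ℂ} (h₁ : ContinuousOn L₁ Z) (h₂ : ContinuousOn L₂ Z)
    (hexp : ∀ z ∈ Z, exp (L₁ z) = exp (L₂ z)) : ∃ k, ∀ z ∈ Z, L₁ z - L₂ z = k := by
  rcases Z.eq_empty_or_nonempty with rfl | ⟨z₀, hz₀⟩
  · simp
  have hone : ∀ z ∈ Z, exp (L₁ z - L₂ z) = 1 := fun z hz => by
    rw [exp_sub, hexp z hz, div_self (exp_ne_zero _)]
  refine ⟨L₁ z₀ - L₂ z₀, fun z hz => isCoveringMap_exp.constOn_of_comp hZ (h₁.sub h₂) ?_ hz hz₀⟩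
  exact fun x hx y hy => Subtype.ext ((hone x hx).trans (hone y hy).symm)

/-- Two logarithms of `(z - a) / (z - b)` compete on `Z`, where `a`, `b` are the endpoints of the
segment: the principal one jumps across the segment, while the one obtained by moving `a` to `b`
inside `B` does not. -/
theorem not_isPreconnected_of_crosses_segment {B Y Z : Set ℂ} {c v : ℂ} (hBo : IsOpen B)
    (hBc : IsPreconnected B) (hBY : Disjoint B Y) (ha : c + v * I ∈ B) (hb : c - v * I ∈ B)
    (hY : Y ∈ 𝓝 c) (hZY : Z ⊆ Y) (hZ : Disjoint Z (segment ℝ (c + v * I) (c - v * I)))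
    (hcross : ∀ᶠ t : ℝ in 𝓝[≠] 0, c + t * v ∈ Z) : ¬ IsPreconnected Z := by
  intro hZc
  have hv : v ≠ 0 := by
    rintro rfl
    exact hBY.ne_of_mem (by simpa using ha) (mem_of_mem_nhds hY) rfl
  obtain ⟨L, hL, exp_L⟩ := exists_continuousOn_exp_eq_div hBo hBc hBY ha hb
  set q : ℂ → ℂ := fun z => (z - (c + v * I)) / (z - (c - v * I)) with hq
  have q_mem : ∀ z ∈ Z, q z ∈ slitPlane := fun z hz =>
    div_sub_mem_slitPlane (disjoint_left.1 hZ hz)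
  have q_cont : ContinuousOn q Z := ContinuousOn.div (by fun_prop) (by fun_prop) fun z hz =>
    sub_ne_zero.2 (hBY.symm.ne_of_mem (hZY hz) hb)
  obtain ⟨k, hk⟩ := exists_eqOn_sub_of_exp_eqOn hZc (hL.mono hZY) (q_cont.clog q_mem)
    fun z hz => by rw [exp_L z (hZY hz), exp_log (slitPlane_ne_zero (q_mem z hz))]
  have tendsto_L : Tendsto (fun t : ℝ => L (c + t * v) - k) (𝓝[≠] 0) (𝓝 (L c - k)) := by
    have hline : Continuous fun t : ℝ => c + t * v := by fun_prop
    have hline₀ : Tendsto (fun t : ℝ => c + t * v) (𝓝 0) (𝓝 c) := by simpa using hline.tendsto 0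
    exact ((hL.continuousAt hY).tendsto.comp
      (tendsto_nhdsWithin_of_tendsto_nhds hline₀)).sub_const k
  refine not_tendsto_log_sub_I_div_add_I _ (tendsto_L.congr' ?_)
  filter_upwards [hcross] with t ht
  have q_line : q (c + t * v) = (t - I) / (t + I) := by
    rw [← mul_div_mul_left _ _ hv, hq]
    ring_nf
  rw [← q_line, ← hk _ ht, sub_sub_cancel]

theorem re_eq_and_abs_im_le_of_mem_segment_conj {w z : ℂ} (hz : z ∈ segment ℝ w (conj w)) :
    z.re = w.re ∧ |z.im| ≤ |w.im| := by
  obtain ⟨a, b, ha, hb, hab, rfl⟩ := hz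
  constructor
  · simp [← add_mul, hab]
  · have him : (a • w + b • conj w).im = (a - b) * w.im := by simp; ring
    rw [him, abs_mul]
    exact mul_le_of_le_one_left (abs_nonneg _) (abs_le.2 ⟨by linarith, by linarith⟩)

theorem disjoint_rays_segment_conj {e w : ℂ} (hre : 0 < w.re) (him : 0 < w.im)
    (hew : 0 < (conj w * e).im) :
    Disjoint (ofReal '' {w.re}ᶜ ∪ (fun t : ℝ => t * e) '' Ici 0) (segment ℝ w (conj w)) := by
  rw [disjoint_left]
  rintro _ (⟨t, ht, rfl⟩ | ⟨t, ht, rfl⟩) hseg <;>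
    obtain ⟨hre', him'⟩ := re_eq_and_abs_im_le_of_mem_segment_conj hseg
  · exact ht (by simpa using hre')
  · simp only [re_ofReal_mul, im_ofReal_mul] at hre' him'
    simp only [mul_im, conj_re, conj_im] at hew
    rw [abs_of_pos him] at him'
    have t_pos : 0 < t := (mem_Ici.1 ht).lt_of_ne (by rintro rfl; simp [hre.ne] at hre')
    nlinarith [(abs_le.1 him').2, mul_pos t_pos hew]

/-- `S` and the segments from `0` to `r` and to `r e` form a loop, which crosses the segment
from `w` to `w̄` only at `w.re`. -/
theorem notMem_of_disjoint_loop {B S Y : Set ℂ} (hB : IsOpen B) (hBc : IsPreconnected B)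
    (hBY : Disjoint B Y) (hS : IsPreconnected S) (hSY : S ⊆ Y) {r : ℝ} {e w : ℂ} (hwr : w.re < r)
    (hre : 0 < w.re) (him : 0 < w.im) (hew : 0 < (conj w * e).im) (hrS : (r : ℂ) ∈ S)
    (hreS : r * e ∈ S) (hSw : Disjoint S (segment ℝ w (conj w))) (hY : Y ∈ 𝓝 (w.re : ℂ))
    (hray : ∀ t ∈ Icc 0 r, (t : ℂ) ∈ Y ∧ t * e ∈ Y) (hw : w ∈ B) : conj w ∉ B := by
  intro hw'
  have hr : 0 < r := hre.trans hwr
  set Z : Set ℂ := ofReal '' Ico 0 w.re ∪ (fun t : ℝ => t * e) '' Icc 0 r ∪ S ∪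
    ofReal '' Ioc w.re r with hZ
  have Z_preconnected : IsPreconnected Z := by
    refine (((isPreconnected_Ico.image _ (by fun_prop)).union' ⟨0, ?_, ?_⟩
      (isPreconnected_Icc.image _ (by fun_prop))).union' ⟨r * e, .inr ?_, hreS⟩ hS).union'
      ⟨r, .inr hrS, ?_⟩ (isPreconnected_Ioc.image _ (by fun_prop))
    · exact ⟨0, ⟨le_rfl, hre⟩, ofReal_zero⟩
    · exact ⟨0, ⟨le_rfl, hr.le⟩, by simp⟩
    · exact ⟨r, ⟨hwr, le_rfl⟩, rfl⟩
    · exact ⟨r, ⟨hr.le, le_rfl⟩, rfl⟩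
  have Z_subset : Z ⊆ Y := by
    rintro _ (((⟨t, ht, rfl⟩ | ⟨t, ht, rfl⟩) | hz) | ⟨t, ht, rfl⟩)
    exacts [(hray t ⟨ht.1, (ht.2.trans hwr).le⟩).1, (hray t ht).2, hSY hz,
      (hray t ⟨(hre.trans ht.1).le, ht.2⟩).1]
  have Z_disjoint : Disjoint Z (segment ℝ w (conj w)) := by
    have hrays := disjoint_rays_segment_conj hre him hew
    refine ((hrays.mono_left ?_).union_left hSw).union_left (hrays.mono_left ?_)
    · exact union_subset_union (image_mono fun t ht => ht.2.ne) (image_mono Icc_subset_Ici_self)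
    · exact (image_mono fun t ht => ht.1.ne').trans subset_union_left
  have crossing : ∀ᶠ t : ℝ in 𝓝[≠] 0, (w.re : ℂ) + t * w.im ∈ Z := by
    have hcont : Tendsto (fun t : ℝ => w.re + t * w.im) (𝓝 0) (𝓝 w.re) :=
      Continuous.tendsto' (by fun_prop) _ _ (by simp)
    filter_upwards [self_mem_nhdsWithin,
      nhdsWithin_le_nhds (hcont.eventually (Ioo_mem_nhds hre hwr))] with t ht hlt
    rw [← ofReal_mul, ← ofReal_add]
    have hne : w.re + t * w.im ≠ w.re := by simpa [him.ne'] using ht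
    rcases hne.lt_or_gt with hlt' | hgt
    exacts [.inl (.inl (.inl ⟨_, ⟨hlt.1.le, hlt'⟩, rfl⟩)), .inr ⟨_, ⟨hgt, hlt.2.le⟩, rfl⟩]
  have conj_eq : (w.re : ℂ) - w.im * I = conj w := by apply Complex.ext <;> simp
  rw [← conj_eq] at hw' Z_disjoint
  nth_rw 1 [← re_add_im w] at hw Z_disjoint
  exact not_isPreconnected_of_crosses_segment hB hBc hBY hw hw' hY Z_subset Z_disjoint crossing
    Z_preconnected

theorem not_eventually_mem_rays_of_disjoint {A B : Set ℂ} (hA : IsOpen A) (hAc : IsPreconnected A)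
    (hB : IsOpen B) (hBc : IsPreconnected B) (hAB : Disjoint A B) (hA₀ : 0 ∉ A) (hB₀ : 0 ∉ B)
    {e w : ℂ} (hre : 0 < w.re) (him : 0 < w.im) (hew : 0 < (conj w * e).im) :
    ¬ ∀ᶠ t : ℝ in 𝓝[>] 0, (t : ℂ) ∈ A ∧ t * e ∈ A ∧ t * w ∈ B ∧ t * conj w ∈ B := by
  intro hrays
  obtain ⟨r, hr, hray⟩ := mem_nhdsGT_iff_exists_Ioc_subset.1 hrays
  have hr_mem : r ∈ Ioc 0 r := ⟨hr, le_rfl⟩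
  obtain ⟨S, hSA, hS, hSc, hrS, hreS⟩ : ∃ S ⊆ A, IsCompact S ∧ IsPreconnected S ∧
      (r : ℂ) ∈ S ∧ r * e ∈ S := by
    have hApath := hA.isConnected_iff_isPathConnected.1 ⟨⟨_, (hray hr_mem).1⟩, hAc⟩
    obtain ⟨path, hpath⟩ := hApath.joinedIn _ (hray hr_mem).1 _ (hray hr_mem).2.1
    exact ⟨range path, range_subset_iff.2 hpath, isCompact_range path.continuous,
      isPreconnected_range path.continuous, path.source_mem_range, path.target_mem_range⟩
  obtain ⟨ρ, hρ, hball⟩ := nhds_basis_closedBall.mem_iff.1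
    (hS.isClosed.isOpen_compl.mem_nhds fun h => hA₀ (hSA h))
  obtain ⟨ε, hε, hεr, hερ⟩ : ∃ ε ∈ Ioc 0 r, ε * w.re < r ∧ ‖ε * w‖ ≤ ρ := by
    have hsmall : ∀ᶠ ε : ℝ in 𝓝 0, ε * w.re < r ∧ ‖ε * w‖ < ρ := by
      refine (ContinuousAt.eventually_lt (by fun_prop) (by fun_prop) ?_).and
        (ContinuousAt.eventually_lt (by fun_prop) (by fun_prop) ?_)
      · simpa using hr
      · simpa using hρ
    obtain ⟨ε, hε⟩ := (Eventually.and (Ioc_mem_nhdsGT (mem_Ioi.1 hr))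
      (hsmall.filter_mono nhdsWithin_le_nhds)).exists
    exact ⟨ε, hε.1, hε.2.1, hε.2.2.le⟩
  refine notMem_of_disjoint_loop (w := ε * w) (Y := insert 0 A) hB hBc
    (disjoint_insert_right.2 ⟨hB₀, hAB.symm⟩) hSc (hSA.trans (subset_insert _ _)) (by simpa)
    (by simpa using mul_pos hε.1 hre) (by simpa using mul_pos hε.1 him)
    (by simpa [mul_assoc] using mul_pos hε.1 hew) hrS hreS ?_ ?_ (fun t ht => ?_)
    (hray hε).2.2.1 (by simpa using (hray hε).2.2.2)
  · refine disjoint_compl_right.mono_right (Subset.trans ?_ hball)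
    exact (convex_closedBall 0 ρ).segment_subset (mem_closedBall_zero_iff.2 hερ)
      (mem_closedBall_zero_iff.2 ((norm_conj _).trans_le hερ))
  · have hre_mem : ((ε * w).re : ℂ) ∈ A := by
      simpa using (hray ⟨mul_pos hε.1 hre, hεr.le⟩).1
    exact mem_of_superset (hA.mem_nhds hre_mem) (subset_insert _ _)
  · rcases ht.1.eq_or_lt with rfl | ht₀
    · simp
    · exact ⟨.inr (hray ⟨ht₀, ht.2⟩).1, .inr (hray ⟨ht₀, ht.2⟩).2.1⟩

theorem exists_analyticAt_re_eventuallyEq {h : ℂ → ℝ} {p : ℂ} (hh : HarmonicAt h p) :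
    ∃ F : ℂ → ℂ, AnalyticAt ℂ F p ∧ ∀ᶠ z in 𝓝 p, (F z).re = h z := by
  obtain ⟨R, hR, hball⟩ := Metric.eventually_nhds_iff_ball.1 hh.eventually
  obtain ⟨F, hF, re_F⟩ := HarmonicOnNhd.exists_analyticOnNhd_ball_re_eq hball
  exact ⟨F, hF p (mem_ball_self hR), re_F.eventuallyEq_of_mem (ball_mem_nhds p hR)⟩

/-- The maximum modulus principle applied to `exp F`, where `h = re F`. -/
theorem eventually_eq_of_harmonicAt_of_isLocalMax {h : ℂ → ℝ} {p : ℂ} (hh : HarmonicAt h p)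
    (hmax : IsLocalMax h p) : ∀ᶠ z in 𝓝 p, h z = h p := by
  obtain ⟨F, hF, re_F⟩ := exists_analyticAt_re_eventuallyEq hh
  have norm_exp_F : norm ∘ (fun z => exp (F z)) =ᶠ[𝓝 p] fun z => Real.exp (h z) :=
    re_F.mono fun z hz => by simp only [comp_apply, norm_exp, hz]
  have hexp : IsLocalMax (fun z => Real.exp (h z)) p := hmax.comp_mono Real.exp_monotone
  have hconst := Complex.eventually_eq_of_isLocalMax_norm
    (hF.cexp.eventually_analyticAt.mono fun z hz => hz.differentiableAt)
    (hexp.congr norm_exp_F.symm)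
  filter_upwards [hconst, norm_exp_F] with z hz norm_z
  exact Real.exp_injective (norm_z.symm.trans ((congrArg norm hz).trans norm_exp_F.self_of_nhds))

theorem not_isLocalExtr_of_harmonicOnNhd {Ω : Set ℂ} (hΩ : IsPreconnected Ω) {h : ℂ → ℝ}
    (hh : HarmonicOnNhd h Ω) (hc : ContinuousOn h (closure Ω)) {a b p : ℂ} (ha : a ∈ closure Ω)
    (hb : b ∈ closure Ω) (hab : h a ≠ h b) (hp : p ∈ Ω) : ¬ IsLocalExtr h p := by
  have h_not_const : ¬ ∀ᶠ z in 𝓝 p, h z = h p := by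
    intro hev
    have hΩ_eq : EqOn h (fun _ => h p) Ω := AnalyticOnNhd.eqOn_of_preconnected_of_eventuallyEq
      (fun z hz => HarmonicAt.analyticAt (hh z hz)) analyticOnNhd_const hΩ hp hev
    have h_eq := hΩ_eq.of_subset_closure hc continuousOn_const subset_closure subset_rfl
    exact hab ((h_eq ha).trans (h_eq hb).symm)
  rintro (hmin | hmax)
  · exact h_not_const ((eventually_eq_of_harmonicAt_of_isLocalMax (hh p hp).neg hmin.neg).mono
      fun z hz => neg_injective hz)
  · exact h_not_const (eventually_eq_of_harmonicAt_of_isLocalMax (hh p hp) hmax)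

theorem exists_tendsto_div_pow_of_analyticOrderAt_eq {f : ℂ → ℂ} {p : ℂ} {m : ℕ}
    (hf : AnalyticAt ℂ f p) (horder : analyticOrderAt f p = m) (hm : m ≠ 0) :
    ∃ u ≠ 0, ∀ ζ : ℂ,
      Tendsto (fun t : ℝ => f (p + u * (t * ζ)) / t ^ m) (𝓝[>] 0) (𝓝 (ζ ^ m)) := by
  obtain ⟨G, hG, hGp, hfG⟩ := hf.analyticOrderAt_eq_natCast.1 horder
  obtain ⟨u, hu⟩ := IsAlgClosed.exists_pow_nat_eq (G p)⁻¹ (Nat.pos_of_ne_zero hm)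
  have hu₀ : u ≠ 0 := by
    rintro rfl
    exact inv_ne_zero hGp (hu.symm.trans (zero_pow hm))
  refine ⟨u, hu₀, fun ζ => ?_⟩
  have hray : Tendsto (fun t : ℝ => p + u * (t * ζ)) (𝓝[>] 0) (𝓝 p) :=
    (Continuous.tendsto' (by fun_prop) _ _ (by simp)).mono_left nhdsWithin_le_nhds
  have hlim : Tendsto (fun t : ℝ => (u * ζ) ^ m * G (p + u * (t * ζ))) (𝓝[>] 0) (𝓝 (ζ ^ m)) := by
    have hval : (u * ζ) ^ m * G p = ζ ^ m := by
      rw [mul_pow, hu, mul_right_comm, inv_mul_cancel₀ hGp, one_mul]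
    exact hval ▸ (hG.continuousAt.tendsto.comp hray).const_mul _
  refine hlim.congr' ?_
  filter_upwards [hray.eventually hfG, self_mem_nhdsWithin] with t ht ht₀
  have ht_ne : (t : ℂ) ≠ 0 := ofReal_ne_zero.2 (mem_Ioi.1 ht₀).ne'
  rw [ht, add_sub_cancel_left, smul_eq_mul, eq_div_iff (pow_ne_zero m ht_ne)]
  ring

theorem deriv_eq_zero_of_fderiv_re_eq_zero {F : ℂ → ℂ} {p : ℂ} (hF : DifferentiableAt ℂ F p)
    (hre : fderiv ℝ (fun z => (F z).re) p = 0) : deriv F p = 0 := by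
  have hre' : fderiv ℝ (fun z => (F z).re) p = reCLM ∘L (fderiv ℂ F p).restrictScalars ℝ :=
    (reCLM.hasFDerivAt.comp p (hF.hasFDerivAt.restrictScalars ℝ)).fderiv
  have hre_apply : ∀ v : ℂ, (v * deriv F p).re = 0 := fun v => by
    simpa [hre] using (DFunLike.congr_fun hre' v).symm
  exact Complex.ext (by simpa using hre_apply 1) (by simpa using hre_apply I)

theorem exists_tendsto_sub_div_pow_of_fderiv_eq_zero {h : ℂ → ℝ} {p : ℂ} (hh : HarmonicAt h p)
    (hcrit : fderiv ℝ h p = 0) (hconst : ¬ ∀ᶠ z in 𝓝 p, h z = h p) :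
    ∃ u ≠ 0, ∃ m : ℕ, 2 ≤ m ∧ ∀ ζ : ℂ,
      Tendsto (fun t : ℝ => (h (p + u * (t * ζ)) - h p) / t ^ m) (𝓝[>] 0) (𝓝 (ζ ^ m).re) := by
  obtain ⟨F, hF, re_F⟩ := exists_analyticAt_re_eventuallyEq hh
  have deriv_F : deriv F p = 0 :=
    deriv_eq_zero_of_fderiv_re_eq_zero hF.differentiableAt
      ((EventuallyEq.fderiv_eq re_F).trans hcrit)
  have order_ne_top : analyticOrderAt (F · - F p) p ≠ ⊤ := by
    rw [Ne, analyticOrderAt_eq_top]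
    refine fun hF₀ => hconst ?_
    filter_upwards [hF₀, re_F] with z hz re_z
    rw [← re_z, ← re_F.self_of_nhds, sub_eq_zero.1 hz]
  obtain ⟨m, hm⟩ := ENat.ne_top_iff_exists.1 order_ne_top
  have two_le_m : 2 ≤ m := by
    have hone : 1 ≤ analyticOrderAt (deriv F) p :=
      Order.one_le_iff_ne_zero.2 (hF.deriv.analyticOrderAt_ne_zero.2 deriv_F)
    have htwo : (1 + 1 : ℕ∞) ≤ m := by
      rw [hm, ← hF.analyticOrderAt_deriv_add_one]
      gcongr
    exact_mod_cast htwo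
  obtain ⟨u, hu, hlim⟩ := exists_tendsto_div_pow_of_analyticOrderAt_eq
    (hF.fun_sub analyticAt_const) hm.symm (by lia)
  refine ⟨u, hu, m, two_le_m, fun ζ => ?_⟩
  have hray : Tendsto (fun t : ℝ => p + u * (t * ζ)) (𝓝[>] 0) (𝓝 p) :=
    (Continuous.tendsto' (by fun_prop) _ _ (by simp)).mono_left nhdsWithin_le_nhds
  refine ((continuous_re.tendsto _).comp (hlim ζ)).congr' ?_
  filter_upwards [hray.eventually re_F] with t ht
  rw [comp_apply, ← ofReal_pow, div_ofReal_re, sub_re, ht, re_F.self_of_nhds]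

theorem re_exp_mul_I_pow (θ : ℝ) (m : ℕ) : (exp (θ * I) ^ m).re = Real.cos (m * θ) := by
  rw [← exp_nat_mul, ← mul_assoc, ← ofReal_natCast, ← ofReal_mul, exp_ofReal_mul_I_re]

theorem exists_homeomorph_eventually_rays_of_fderiv_eq_zero {h : ℂ → ℝ} {p : ℂ}
    (hh : HarmonicAt h p) (hcrit : fderiv ℝ h p = 0) (hconst : ¬ ∀ᶠ z in 𝓝 p, h z = h p) :
    ∃ T : ℂ ≃ₜ ℂ, T 0 = p ∧ ∃ m : ℕ, 2 ≤ m ∧ ∀ θ : ℝ,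
      (0 < Real.cos (m * θ) → ∀ᶠ t : ℝ in 𝓝[>] 0, h p < h (T (t * exp (θ * I)))) ∧
      (Real.cos (m * θ) < 0 → ∀ᶠ t : ℝ in 𝓝[>] 0, h (T (t * exp (θ * I))) < h p) := by
  obtain ⟨u, hu, m, hm, hlim⟩ := exists_tendsto_sub_div_pow_of_fderiv_eq_zero hh hcrit hconst
  refine ⟨(Homeomorph.mulLeft₀ u hu).trans (Homeomorph.addLeft p), by simp, m, hm,
    fun θ => ⟨fun hθ => ?_, fun hθ => ?_⟩⟩ <;> rw [← re_exp_mul_I_pow] at hθ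
  · filter_upwards [(hlim _).eventually_const_lt hθ, self_mem_nhdsWithin] with t hquot ht
    exact sub_pos.1 (by simpa using (lt_div_iff₀ (pow_pos ht m)).1 hquot)
  · filter_upwards [(hlim _).eventually_lt_const hθ, self_mem_nhdsWithin] with t hquot ht
    exact sub_neg.1 (by simpa using (div_lt_iff₀ (pow_pos ht m)).1 hquot)

theorem exists_angle_cos_mul_neg_cos_mul_three_eq_one {m : ℕ} (hm : 2 ≤ m) :
    ∃ φ : ℝ, 0 < φ ∧ φ ≤ Real.pi / 3 ∧ Real.cos (m * φ) < 0 ∧ Real.cos (m * (3 * φ)) = 1 := by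
  have hm₂ : (2 : ℝ) ≤ m := by exact_mod_cast hm
  have mul_angle : m * (2 * Real.pi / (3 * m)) = Real.pi - Real.pi / 3 := by
    field_simp
    ring
  refine ⟨2 * Real.pi / (3 * m), by positivity, ?_, by simp [mul_angle, Real.cos_pi_sub], ?_⟩
  · rw [div_le_div_iff₀ (by positivity) (by norm_num)]
    nlinarith [Real.pi_pos]
  · rw [mul_left_comm, mul_angle, ← Real.cos_two_pi]
    ring_nf

/-- Near a critical point `h - h p` behaves like `re (c (z - p) ^ m)` with `m ≥ 2`, so `h` exceeds
`h p` along two rays which are separated by rays where `h` is less than `h p`. -/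
theorem fderiv_ne_zero_of_isPreconnected {h : ℂ → ℝ} {p : ℂ} (hh : HarmonicAt h p)
    (hconst : ¬ ∀ᶠ z in 𝓝 p, h z = h p) {A B : Set ℂ} (hA : IsOpen A) (hAc : IsPreconnected A)
    (hB : IsOpen B) (hBc : IsPreconnected B) (hAh : A ⊆ {z | h p < h z})
    (hBh : B ⊆ {z | h z < h p}) (hAp : ∀ᶠ z in 𝓝 p, h p < h z → z ∈ A)
    (hBp : ∀ᶠ z in 𝓝 p, h z < h p → z ∈ B) : fderiv ℝ h p ≠ 0 := by
  intro hcrit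
  obtain ⟨T, rfl, m, hm, hrays⟩ :=
    exists_homeomorph_eventually_rays_of_fderiv_eq_zero hh hcrit hconst
  have hAB : Disjoint A B := disjoint_left.2 fun z hzA hzB =>
    lt_asymm (b := h z) (hAh hzA) (hBh hzB)
  have hlim : ∀ ζ : ℂ, Tendsto (fun t : ℝ => T (t * ζ)) (𝓝[>] 0) (𝓝 (T 0)) := fun ζ =>
    (Continuous.tendsto' (by fun_prop) _ _ (by simp)).mono_left nhdsWithin_le_nhds
  have mem_A : ∀ θ : ℝ, 0 < Real.cos (m * θ) → ∀ᶠ t : ℝ in 𝓝[>] 0, T (t * exp (θ * I)) ∈ A :=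
    fun θ hθ => ((hlim _).eventually hAp).mp ((hrays θ).1 hθ |>.mono fun _ ht hA => hA ht)
  have mem_B : ∀ θ : ℝ, Real.cos (m * θ) < 0 → ∀ᶠ t : ℝ in 𝓝[>] 0, T (t * exp (θ * I)) ∈ B :=
    fun θ hθ => ((hlim _).eventually hBp).mp ((hrays θ).2 hθ |>.mono fun _ ht hB => hB ht)
  obtain ⟨φ, φ_pos, φ_le, cos_m_mul_φ, cos_three⟩ :=
    exists_angle_cos_mul_neg_cos_mul_three_eq_one hm
  have conj_exp : conj (exp (φ * I)) = exp ((-φ : ℝ) * I) := by simp [← exp_conj]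
  refine not_eventually_mem_rays_of_disjoint (w := exp (φ * I)) (e := exp ((3 * φ : ℝ) * I))
    (hA.preimage T.continuous) (T.isPreconnected_preimage.2 hAc)
    (hB.preimage T.continuous) (T.isPreconnected_preimage.2 hBc)
    (hAB.preimage T) (fun h₀ => lt_irrefl (h (T 0)) (hAh h₀))
    (fun h₀ => lt_irrefl (h (T 0)) (hBh h₀)) ?_ ?_ ?_ ?_
  · rw [exp_ofReal_mul_I_re]
    exact Real.cos_pos_of_mem_Ioo ⟨by linarith, by linarith [Real.pi_pos]⟩
  · rw [exp_ofReal_mul_I_im]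
    exact Real.sin_pos_of_pos_of_lt_pi φ_pos (by linarith)
  · rw [conj_exp, ← exp_add, ← add_mul, ← ofReal_add, exp_ofReal_mul_I_im]
    exact Real.sin_pos_of_pos_of_lt_pi (by linarith) (by linarith [Real.pi_pos])
  · rw [conj_exp]
    filter_upwards [mem_A 0 (by simp), mem_A (3 * φ) (by simp [cos_three]), mem_B φ cos_m_mul_φ,
      mem_B (-φ) (by simpa using cos_m_mul_φ)] with t h₁ he hw hw'
    exact ⟨by simpa using h₁, he, hw, hw'⟩

section MaximumPrinciple

variable {X α : Type*} [TopologicalSpace X] [LinearOrder α] [TopologicalSpace α] {Ω : Set X}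
  {H : X → α}

theorem exists_mem_frontier_isMaxOn [ClosedIciTopology α] (hΩ : IsOpen Ω) (hne : Ω.Nonempty)
    (hcpt : IsCompact (closure Ω)) (hH : ContinuousOn H (closure Ω))
    (hmax : ∀ z ∈ Ω, ¬ IsLocalMax H z) : ∃ y ∈ frontier Ω, IsMaxOn H (closure Ω) y := by
  obtain ⟨y, hy, hy_max⟩ := hcpt.exists_isMaxOn hne.closure hH
  refine ⟨y, hΩ.frontier_eq ▸ ⟨hy, fun hyΩ => hmax y hyΩ ?_⟩, hy_max⟩
  exact hy_max.isLocalMax (mem_of_superset (hΩ.mem_nhds hyΩ) subset_closure)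

theorem lt_of_forall_frontier_le [ClosedIciTopology α] (hΩ : IsOpen Ω)
    (hcpt : IsCompact (closure Ω)) (hH : ContinuousOn H (closure Ω))
    (hmax : ∀ z ∈ Ω, ¬ IsLocalMax H z) {M : α} (hM : ∀ y ∈ frontier Ω, H y ≤ M) {x : X}
    (hx : x ∈ Ω) : H x < M := by
  obtain ⟨y, hy, hy_max⟩ := exists_mem_frontier_isMaxOn hΩ ⟨x, hx⟩ hcpt hH hmax
  refine ((hy_max (subset_closure hx)).trans (hM y hy)).lt_of_ne fun hxM => hmax x hx ?_
  filter_upwards [hΩ.mem_nhds hx] with z hz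
  exact hxM ▸ (hy_max (subset_closure hz)).trans (hM y hy)

theorem mapsTo_ball_of_forall_frontier_norm_le {E : Type*} [NormedAddCommGroup E]
    [NormedSpace ℝ E] [Nontrivial E] {f : X → E} {r : ℝ} (hΩ : IsOpen Ω)
    (hcpt : IsCompact (closure Ω)) (hf : ContinuousOn f (closure Ω))
    (hmax : ∀ ℓ : E →L[ℝ] ℝ, ℓ ≠ 0 → ∀ z ∈ Ω, ¬ IsLocalMax (ℓ ∘ f) z)
    (hfr : ∀ y ∈ frontier Ω, ‖f y‖ ≤ r) : MapsTo f Ω (ball 0 r) := by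
  intro x hx
  obtain ⟨ℓ, hℓ, hℓx⟩ := exists_dual_vector' ℝ (f x)
  have hℓ0 : ℓ ≠ 0 := norm_ne_zero_iff.1 (hℓ ▸ one_ne_zero)
  have ℓ_le : ∀ y ∈ frontier Ω, ℓ (f y) ≤ r := fun y hy =>
    calc ℓ (f y) ≤ ‖ℓ‖ * ‖f y‖ := (le_abs_self _).trans (ℓ.le_opNorm _)
      _ ≤ r := by rw [hℓ, one_mul]; exact hfr y hy
  rw [mem_ball_zero_iff]
  exact hℓx.symm.trans_lt <| lt_of_forall_frontier_le hΩ hcpt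
    (ℓ.continuous.comp_continuousOn hf) (hmax ℓ hℓ0) ℓ_le hx

variable [LocallyConnectedSpace X] [OrderTopology α]

theorem frontier_inter_connectedComponentIn_superlevel_nonempty (hΩ : IsOpen Ω)
    (hcpt : IsCompact (closure Ω)) (hH : Continuous H) (hmax : ∀ z ∈ Ω, ¬ IsLocalMax H z) {c : α}
    {x : X} (hx : x ∈ Ω) (hcx : c < H x) :
    (frontier Ω ∩ connectedComponentIn {z | c < H z} x).Nonempty := by
  set V := connectedComponentIn (Ω ∩ {z | c < H z}) x
  have V_open : IsOpen V := (hΩ.inter (isOpen_lt continuous_const hH)).connectedComponentIn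
  have x_mem : x ∈ V := mem_connectedComponentIn ⟨hx, hcx⟩
  have V_subset : V ⊆ Ω ∩ {z | c < H z} := connectedComponentIn_subset _ _
  have closure_subset : closure V ⊆ closure Ω := closure_mono (V_subset.trans inter_subset_left)
  obtain ⟨y, hyV, hy_max⟩ := exists_mem_frontier_isMaxOn V_open ⟨x, x_mem⟩
    (hcpt.of_isClosed_subset isClosed_closure closure_subset) hH.continuousOn
    fun z hz => hmax z (V_subset hz).1
  have hcy : c < H y := hcx.trans_le (hy_max (subset_closure x_mem))
  rw [V_open.frontier_eq] at hyV
  have insert_preconnected : IsPreconnected (insert y V) :=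
    isPreconnected_connectedComponentIn.subset_closure (subset_insert _ _)
      (insert_subset hyV.1 subset_closure)
  have insert_subset_of {s : Set X} (hys : y ∈ s) (hVs : V ⊆ s) :
      y ∈ connectedComponentIn s x :=
    insert_preconnected.subset_connectedComponentIn (mem_insert_of_mem _ x_mem)
      (insert_subset hys hVs) (mem_insert _ _)
  refine ⟨y, hΩ.frontier_eq ▸ ⟨closure_subset hyV.1, fun hyΩ => hyV.2 ?_⟩, ?_⟩
  · exact insert_subset_of ⟨hyΩ, hcy⟩ V_subset
  · exact insert_subset_of hcy (V_subset.trans inter_subset_right)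

theorem exists_isOpen_isPreconnected_superlevel (hΩ : IsOpen Ω) (hcpt : IsCompact (closure Ω))
    (hH : Continuous H) (hmax : ∀ z ∈ Ω, ¬ IsLocalMax H z) {c : α}
    (hfr : IsPreconnected (frontier Ω ∩ {z | c < H z})) :
    ∃ A, IsOpen A ∧ IsPreconnected A ∧ A ⊆ {z | c < H z} ∧ Ω ∩ {z | c < H z} ⊆ A := by
  rcases (Ω ∩ {z | c < H z}).eq_empty_or_nonempty with hempty | ⟨x, hx⟩
  · exact ⟨∅, isOpen_empty, isPreconnected_empty, empty_subset _, hempty.subset⟩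
  refine ⟨connectedComponentIn {z | c < H z} x,
    (isOpen_lt continuous_const hH).connectedComponentIn, isPreconnected_connectedComponentIn,
    connectedComponentIn_subset _ _, fun z hz => ?_⟩
  obtain ⟨x', hx', hxx'⟩ :=
    frontier_inter_connectedComponentIn_superlevel_nonempty hΩ hcpt hH hmax hx.1 hx.2
  obtain ⟨z', hz', hzz'⟩ :=
    frontier_inter_connectedComponentIn_superlevel_nonempty hΩ hcpt hH hmax hz.1 hz.2
  have hx'z' : z' ∈ connectedComponentIn {z | c < H z} x' :=
    hfr.subset_connectedComponentIn ⟨hx', connectedComponentIn_subset _ _ hxx'⟩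
      inter_subset_right ⟨hz', connectedComponentIn_subset _ _ hzz'⟩
  rw [connectedComponentIn_eq hxx', connectedComponentIn_eq hx'z', ← connectedComponentIn_eq hzz']
  exact mem_connectedComponentIn hz.2

theorem exists_isOpen_isPreconnected_sublevel (hΩ : IsOpen Ω) (hcpt : IsCompact (closure Ω))
    (hH : Continuous H) (hmin : ∀ z ∈ Ω, ¬ IsLocalMin H z) {c : α}
    (hfr : IsPreconnected (frontier Ω ∩ {z | H z < c})) :
    ∃ A, IsOpen A ∧ IsPreconnected A ∧ A ⊆ {z | H z < c} ∧ Ω ∩ {z | H z < c} ⊆ A :=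
  exists_isOpen_isPreconnected_superlevel (α := αᵒᵈ) hΩ hcpt hH hmin hfr

end MaximumPrinciple

universe u v in
theorem exists_continuous_eqOn_of_isClosed {X : Type u} {Y : Type v} [TopologicalSpace X]
    [NormalSpace X] [TopologicalSpace Y] [TietzeExtension.{u, v} Y] {s : Set X}
    (hs : IsClosed s) {f : X → Y} (hf : ContinuousOn f s) :
    ∃ F : X → Y, Continuous F ∧ EqOn F f s := by
  obtain ⟨F, hF⟩ := ContinuousMap.exists_restrict_eq hs ⟨s.domRestrict f, hf.domRestrict⟩
  exact ⟨F, F.continuous, fun x hx => DFunLike.congr_fun hF ⟨x, hx⟩⟩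

theorem fderiv_ne_zero_of_isPreconnected_frontier_inter {Ω : Set ℂ} (hΩ : IsOpen Ω)
    (hb : Bornology.IsBounded Ω) {h : ℂ → ℝ} (hc : ContinuousOn h (closure Ω))
    (hextr : ∀ z ∈ Ω, ¬ IsLocalExtr h z) {p : ℂ} (hp : p ∈ Ω) (hh : HarmonicAt h p)
    (hgt : IsPreconnected (frontier Ω ∩ {z | h p < h z}))
    (hlt : IsPreconnected (frontier Ω ∩ {z | h z < h p})) : fderiv ℝ h p ≠ 0 := by
  obtain ⟨H, hH, hHh⟩ := exists_continuous_eqOn_of_isClosed isClosed_closure hc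
  have hHh_ev : ∀ z ∈ Ω, H =ᶠ[𝓝 z] h := fun z hz =>
    (hHh.mono subset_closure).eventuallyEq_of_mem (hΩ.mem_nhds hz)
  have hHp : H p = h p := hHh (subset_closure hp)
  have frontier_inter_eq (P : ℝ → Prop) :
      frontier Ω ∩ {z | P (H z)} = frontier Ω ∩ {z | P (h z)} := by
    ext z
    refine and_congr_right fun hz => ?_
    rw [mem_ofPred_eq, mem_ofPred_eq, hHh (frontier_subset_closure hz)]
  have hextr' : ∀ z ∈ Ω, ¬ IsLocalExtr H z := fun z hz =>
    (hHh_ev z hz).isLocalExtr_iff.not.2 (hextr z hz)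
  obtain ⟨A, hA, hAc, hAH, hAΩ⟩ := exists_isOpen_isPreconnected_superlevel hΩ hb.isCompact_closure
    hH (fun z hz hmax => hextr' z hz (.inr hmax)) (c := h p) (frontier_inter_eq (h p < ·) ▸ hgt)
  obtain ⟨B, hB, hBc, hBH, hBΩ⟩ := exists_isOpen_isPreconnected_sublevel hΩ hb.isCompact_closure
    hH (fun z hz hmin => hextr' z hz (.inl hmin)) (c := h p) (frontier_inter_eq (· < h p) ▸ hlt)
  rw [← (hHh_ev p hp).fderiv_eq]
  refine fderiv_ne_zero_of_isPreconnected ((harmonicAt_congr_nhds (hHh_ev p hp)).2 hh) ?_ hA hAc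
    hB hBc (by rwa [hHp]) (by rwa [hHp]) ?_ ?_
  · exact fun hconst => hextr' p hp (.inr (hconst.mono fun z hz => hz.le))
  · filter_upwards [hΩ.mem_nhds hp] with z hz hlt
    exact hAΩ ⟨hz, hHp ▸ hlt⟩
  · filter_upwards [hΩ.mem_nhds hp] with z hz hlt
    exact hBΩ ⟨hz, hHp ▸ hlt⟩

section BoundaryArcs

theorem isPreconnected_setOf_mem_sphere_lt_mul_re {r : ℝ} (hr : 0 ≤ r) (c : ℝ) :
    IsPreconnected {z ∈ sphere (0 : ℂ) 1 | c < r * z.re} := by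
  have image_eq : {z ∈ sphere (0 : ℂ) 1 | c < r * z.re} =
      (fun θ : ℝ => exp (θ * I)) '' {θ ∈ Icc (-Real.pi) Real.pi | c < r * Real.cos θ} := by
    ext z
    constructor
    · rintro ⟨hz, hcz⟩
      have hexp : exp (arg z * I) = z := by
        simpa [mem_sphere_zero_iff_norm.1 hz] using norm_mul_exp_arg_mul_I z
      refine ⟨arg z, ⟨⟨(neg_pi_lt_arg z).le, arg_le_pi z⟩, ?_⟩, hexp⟩
      rwa [← exp_ofReal_mul_I_re, hexp]
    · rintro ⟨θ, ⟨-, hθ⟩, rfl⟩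
      exact ⟨by simp, by rwa [exp_ofReal_mul_I_re]⟩
  rw [image_eq]
  refine (OrdConnected.isPreconnected ⟨?_⟩).image _ (by fun_prop)
  rintro a ⟨ha, hca⟩ b ⟨hb, hcb⟩ x ⟨hax, hxb⟩
  refine ⟨⟨ha.1.trans hax, hxb.trans hb.2⟩, ?_⟩
  rcases le_total 0 x with hx | hx
  · have hcos : Real.cos b ≤ Real.cos x := Real.cos_le_cos_of_nonneg_of_le_pi hx hb.2 hxb
    exact hcb.trans_le (by gcongr)
  · have hcos : Real.cos a ≤ Real.cos x := by
      rw [← Real.cos_neg a, ← Real.cos_neg x]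
      exact Real.cos_le_cos_of_nonneg_of_le_pi (neg_nonneg.2 hx) (neg_le.1 ha.1) (neg_le_neg hax)
    exact hca.trans_le (by gcongr)

theorem exists_eq_mul_re_mul (ℓ : ℂ →L[ℝ] ℝ) :
    ∃ r : ℝ, 0 ≤ r ∧ ∃ u : Circle, ∀ z, ℓ z = r * (u * z).re := by
  set w : ℂ := ⟨ℓ 1, -ℓ I⟩
  refine ⟨‖w‖, norm_nonneg w, Circle.exp (arg w), fun z => ?_⟩
  calc ℓ z = ℓ (z.re • 1 + z.im • I) := by simp [re_add_im]
    _ = (w * z).re := by simp only [map_add, map_smul, smul_eq_mul, mul_re, w]; ring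
    _ = ‖w‖ * (Circle.exp (arg w) * z).re := by
      rw [← re_ofReal_mul, ← mul_assoc, Circle.coe_exp, norm_mul_exp_arg_mul_I]

theorem isPreconnected_setOf_mem_sphere_lt_clm (ℓ : ℂ →L[ℝ] ℝ) (c : ℝ) :
    IsPreconnected {z ∈ sphere (0 : ℂ) 1 | c < ℓ z} := by
  obtain ⟨r, hr, u, hu⟩ := exists_eq_mul_re_mul ℓ
  convert (rotation u).toHomeomorph.isPreconnected_preimage.2
    (isPreconnected_setOf_mem_sphere_lt_mul_re hr c)
  ext z
  simp only [mem_preimage, mem_ofPred_eq, mem_sphere_zero_iff_norm, hu,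
    LinearIsometryEquiv.coe_toHomeomorph, rotation_apply, norm_mul, Circle.norm_coe, one_mul]

end BoundaryArcs

theorem isLocalHomeomorph_domRestrict {X Y : Type*} [TopologicalSpace X] [TopologicalSpace Y]
    {f : X → Y} {s : Set X} (hs : IsOpen s) (hf : IsLocalHomeomorphOn f s) :
    IsLocalHomeomorph (s.domRestrict f) :=
  isLocalHomeomorph_iff_isLocalHomeomorphOn_univ.2 <|
    hf.comp hs.isOpenEmbedding_subtypeVal.isLocalHomeomorph.isLocalHomeomorphOn fun x _ => x.2

section LocalDiffeomorphism

variable {𝕜 E F : Type*} [NontriviallyNormedField 𝕜] [NormedAddCommGroup E] [NormedSpace 𝕜 E]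

theorem exists_continuousLinearEquiv_eq_of_forall_comp_ne_zero [CompleteSpace 𝕜]
    [FiniteDimensional 𝕜 E] {f : E →L[𝕜] E} (hf : ∀ ℓ : E →L[𝕜] 𝕜, ℓ ≠ 0 → ℓ ∘L f ≠ 0) :
    ∃ e : E ≃L[𝕜] E, (e : E →L[𝕜] E) = f := by
  have f_surj : (f : E →ₗ[𝕜] E).range = ⊤ := by
    by_contra hne
    obtain ⟨ℓ, hℓ, hfℓ⟩ := Submodule.exists_le_ker_of_lt_top _ (lt_top_iff_ne_top.2 hne)
    refine hf ℓ.toContinuousLinearMap (by simpa using hℓ) ?_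
    ext x
    exact hfℓ ⟨x, rfl⟩
  have f_inj : (f : E →ₗ[𝕜] E).ker = ⊥ := LinearMap.ker_eq_bot_iff_range_eq_top.2 f_surj
  exact ⟨(LinearEquiv.ofBijective (f : E →ₗ[𝕜] E)
    ⟨LinearMap.ker_eq_bot.1 f_inj, LinearMap.range_eq_top.1 f_surj⟩).toContinuousLinearEquiv, rfl⟩

variable [CompleteSpace E] [NormedAddCommGroup F] [NormedSpace 𝕜 F] {f : E → F} {s : Set E}

theorem isLocalHomeomorphOn_of_hasStrictFDerivAt_equiv
    (hf : ∀ x ∈ s, ∃ e : E ≃L[𝕜] F, HasStrictFDerivAt f (e : E →L[𝕜] F) x) :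
    IsLocalHomeomorphOn f s := fun x hx =>
  let ⟨_, he⟩ := hf x hx
  ⟨he.toOpenPartialHomeomorph f, he.mem_toOpenPartialHomeomorph_source, rfl⟩

theorem exists_contDiffOn_invOn_of_hasStrictFDerivAt_equiv {n : WithTop ℕ∞} {t : Set F}
    (hs : IsOpen s) (hbij : BijOn f s t) (hf : ContDiffOn 𝕜 n f s)
    (hf' : ∀ x ∈ s, ∃ e : E ≃L[𝕜] F, HasStrictFDerivAt f (e : E →L[𝕜] F) x) :
    ∃ f' : F → E, ContDiffOn 𝕜 n f' t ∧ InvOn f' f s t := by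
  have f_open : IsOpenMap (s.domRestrict f) :=
    (isLocalHomeomorph_domRestrict hs
      (isLocalHomeomorphOn_of_hasStrictFDerivAt_equiv hf')).isOpenMap
  let φ := OpenPartialHomeomorph.ofContinuousOpenRestrict (hbij.toPartialEquiv f s t)
    hf.continuousOn f_open hs
  refine ⟨φ.symm, fun y hy => ?_, hbij.invOn_invFunOn⟩
  have hx : φ.symm y ∈ s := φ.map_target hy
  obtain ⟨e, he⟩ := hf' _ hx
  exact (φ.contDiffAt_symm hy he.hasFDerivAt (hf.contDiffAt (hs.mem_nhds hx))).contDiffWithinAt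

end LocalDiffeomorphism

section ProperLocalHomeomorphism

variable {X Y : Type*} [TopologicalSpace X] [TopologicalSpace Y]

theorem isProperMap_restrict_of_forall_frontier [T2Space Y] {s : Set X} {t : Set Y} {f : X → Y}
    (hs : IsOpen s) (hcpt : IsCompact (closure s)) (hf : ContinuousOn f (closure s))
    (hst : MapsTo f s t) (hfr : ∀ x ∈ frontier s, f x ∉ t) : IsProperMap (hst.restrict f s t) := by
  have : CompactSpace (closure s) := isCompact_iff_compactSpace.1 hcpt
  have mem_of_mem {x : X} (hx : x ∈ closure s) (hxt : f x ∈ t) : x ∈ s := by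
    by_contra hxs
    exact hfr x (hs.frontier_eq ▸ ⟨hx, hxs⟩) hxt
  let e : s ≃ₜ (closure s).domRestrict f ⁻¹' t :=
    { toFun x := ⟨⟨x, subset_closure x.2⟩, hst x.2⟩
      invFun x := ⟨x, mem_of_mem x.1.2 x.2⟩
      left_inv _ := rfl
      right_inv _ := rfl }
  exact (hf.domRestrict.isProperMap.restrictPreimage t).comp e.isProperMap

theorem injective_of_isCoveringMap_of_simplyConnectedSpace [PathConnectedSpace X]
    [SimplyConnectedSpace Y] {f : X → Y} (hf : IsCoveringMap f) : Injective f := by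
  intro a b hab
  obtain ⟨P⟩ := PathConnectedSpace.joined a b
  have h := hf.monodromy_eq_of_map_eq (γ := .refl (f a)) (ex := ⟨a, rfl⟩) (ey := ⟨b, hab.symm⟩)
    (.mk P) (Subsingleton.elim _ _)
  rw [hf.monodromy_refl] at h
  exact congrArg Subtype.val h

theorem isCoveringMap_of_isProperMap_of_isLocalHomeomorph [T2Space X] {f : X → Y}
    (hf : IsProperMap f) (hloc : IsLocalHomeomorph f) : IsCoveringMap f := by
  rw [isCoveringMap_iff_isCoveringMapOn_univ]
  refine hf.isClosedMap.isCoveringMapOn_of_isLocalHomeomorphOn (fun y _ => ?_)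
    hloc.isLocalHomeomorphOn
  refine (hf.isCompact_preimage isCompact_singleton).finite ?_
  refine .of_openPartialHomeomorph f subset_rfl fun x _ => ?_
  obtain ⟨φ, hxφ, hφ⟩ := hloc x
  exact ⟨φ, hxφ, hφ.symm⟩

theorem bijective_of_isProperMap_of_isLocalHomeomorph [T2Space X] [PathConnectedSpace X]
    [SimplyConnectedSpace Y] {f : X → Y} (hf : IsProperMap f) (hloc : IsLocalHomeomorph f) :
    Bijective f := by
  refine ⟨?_, range_eq_univ.1 ?_⟩
  · exact injective_of_isCoveringMap_of_simplyConnectedSpace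
      (isCoveringMap_of_isProperMap_of_isLocalHomeomorph hf hloc)
  · exact IsClopen.eq_univ ⟨hf.isClosed_range, hloc.isOpenMap.isOpen_range⟩ (range_nonempty f)

theorem bijOn_of_isLocalHomeomorphOn_of_forall_frontier [T2Space X] [T2Space Y] {s : Set X}
    {t : Set Y} [SimplyConnectedSpace t] {f : X → Y} (hs : IsOpen s) (hs' : IsPathConnected s)
    (hcpt : IsCompact (closure s)) (ht : IsOpen t) (hf : ContinuousOn f (closure s))
    (hst : MapsTo f s t) (hfr : ∀ x ∈ frontier s, f x ∉ t) (hloc : IsLocalHomeomorphOn f s) :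
    BijOn f s t := by
  have : PathConnectedSpace s := isPathConnected_iff_pathConnectedSpace.1 hs'
  have restrict_proper : IsProperMap (hst.restrict f s t) :=
    isProperMap_restrict_of_forall_frontier hs hcpt hf hst hfr
  have restrict_local : IsLocalHomeomorph (hst.restrict f s t) :=
    .of_comp (g := ((↑) : t → Y)) (isLocalHomeomorph_domRestrict hs hloc)
      ht.isOpenEmbedding_subtypeVal.isLocalHomeomorph restrict_proper.continuous
  obtain ⟨hinj, hsurj⟩ :=
    bijective_of_isProperMap_of_isLocalHomeomorph restrict_proper restrict_local
  exact ⟨hst, hst.restrict_inj.1 hinj, hst.restrict_surjective_iff.1 hsurj⟩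

end ProperLocalHomeomorphism

section Harmonic

variable {f : ℂ → ℝ} {g : ℂ → ℂ} {U : Set ℂ}

theorem HarmonicOnSet.harmonicOnNhd (hU : IsOpen U) (hf : HarmonicOnSet f U) :
    HarmonicOnNhd f U := by
  refine fun p hp => ⟨hf.1.contDiffAt (hU.mem_nhds hp), ?_⟩
  filter_upwards [hU.mem_nhds hp] with z hz
  have fderiv_contDiffAt : ContDiffAt ℝ 1 (fderiv ℝ f) z :=
    (hf.1.contDiffAt (hU.mem_nhds hz)).fderiv_right (by norm_num)
  have fderiv_diff : DifferentiableAt ℝ (fderiv ℝ f) z :=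
    fderiv_contDiffAt.differentiableAt one_ne_zero
  simp only [laplacian_eq_iteratedFDeriv_complexPlane, iteratedFDeriv_two_apply]
  simpa [fderiv_clm_apply fderiv_diff] using hf.2 z hz

theorem harmonicOnNhd_of_re_of_im (hre : HarmonicOnNhd (fun z => (g z).re) U)
    (him : HarmonicOnNhd (fun z => (g z).im) U) : HarmonicOnNhd g U := by
  convert (hre.comp_CLM ofRealCLM).add (him.comp_CLM (ofRealCLM.smulRight I)) using 1
  ext z
  simp [re_add_im]

theorem analyticAt_of_harmonicAt {F : Type*} [NormedAddCommGroup F] [NormedSpace ℝ F]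
    [FiniteDimensional ℝ F] {g : ℂ → F} {p : ℂ} (hg : HarmonicAt g p) : AnalyticAt ℝ g p := by
  let b := Module.finBasis ℝ F
  have coord_analytic (i) : AnalyticAt ℝ (fun z => b.coord i (g z)) p :=
    HarmonicAt.analyticAt (hg.comp_CLM (b.coord i).toContinuousLinearMap)
  have sum_analytic : AnalyticAt ℝ (fun z => ∑ i, b.coord i (g z) • b i) p :=
    Finset.univ.analyticAt_fun_sum fun i _ => (coord_analytic i).smul analyticAt_const
  simpa only [b.coord_apply, b.sum_repr] using sum_analytic

end Harmonic

section RadoKneserChoquet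

variable {Ω : Set ℂ} {γ g : ℂ → ℂ}

theorem not_isLocalExtr_clm_comp (hΩc : IsPreconnected Ω) (hgc : ContinuousOn g (closure Ω))
    (hg : HarmonicOnNhd g Ω) (hsphere : sphere 0 1 ⊆ g '' closure Ω) {ℓ : ℂ →L[ℝ] ℝ} (hℓ : ℓ ≠ 0)
    {p : ℂ} (hp : p ∈ Ω) : ¬ IsLocalExtr (ℓ ∘ g) p := by
  obtain ⟨v, hv⟩ : ∃ v, ℓ v ≠ 0 := DFunLike.ne_iff.1 hℓ
  set u : ℂ := ‖v‖⁻¹ • v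
  have hv0 : v ≠ 0 := fun h => hv (h ▸ map_zero ℓ)
  have u_norm : ‖u‖ = 1 := norm_smul_inv_norm hv0
  have hu : ℓ u ≠ 0 := by
    rw [map_smul]; exact smul_ne_zero (inv_ne_zero (norm_ne_zero_iff.2 hv0)) hv
  obtain ⟨a, ha, hau⟩ := hsphere (mem_sphere_zero_iff_norm.2 u_norm)
  obtain ⟨b, hb, hbu⟩ := hsphere (mem_sphere_zero_iff_norm.2 ((norm_neg u).trans u_norm))
  refine not_isLocalExtr_of_harmonicOnNhd hΩc (hg.comp_CLM ℓ)
    (ℓ.continuous.comp_continuousOn hgc) ha hb ?_ hp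
  rw [comp_apply, comp_apply, hau, hbu, map_neg]
  exact fun h => hu (self_eq_neg.1 h)

theorem isPreconnected_frontier_inter_lt_clm (hγ : ContinuousOn γ (sphere 0 1))
    (hΓ : frontier Ω = γ '' sphere 0 1) (hgγ : ∀ z ∈ sphere 0 1, g (γ z) = z) (ℓ : ℂ →L[ℝ] ℝ)
    (c : ℝ) : IsPreconnected (frontier Ω ∩ {z | c < ℓ (g z)}) := by
  have image_eq : frontier Ω ∩ {z | c < ℓ (g z)} = γ '' {z ∈ sphere 0 1 | c < ℓ z} := by
    rw [hΓ, ← image_inter_preimage]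
    refine congrArg (γ '' ·) (ext fun z => and_congr_right fun hz => ?_)
    simp only [mem_preimage, mem_ofPred_eq, hgγ z hz]
  rw [image_eq]
  exact (isPreconnected_setOf_mem_sphere_lt_clm ℓ c).image γ (hγ.mono (sep_subset _ _))

theorem exists_hasStrictFDerivAt_equiv_of_forall_isPreconnected (hΩ : IsOpen Ω)
    (hΩb : Bornology.IsBounded Ω) (hgc : ContinuousOn g (closure Ω))
    (hextr : ∀ ℓ : ℂ →L[ℝ] ℝ, ℓ ≠ 0 → ∀ z ∈ Ω, ¬ IsLocalExtr (ℓ ∘ g) z)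
    (harc : ∀ (ℓ : ℂ →L[ℝ] ℝ) (c : ℝ), IsPreconnected (frontier Ω ∩ {z | c < ℓ (g z)}))
    {p : ℂ} (hp : p ∈ Ω) (hg : HarmonicAt g p) :
    ∃ e : ℂ ≃L[ℝ] ℂ, HasStrictFDerivAt g (e : ℂ →L[ℝ] ℂ) p := by
  have hgp : HasStrictFDerivAt g (fderiv ℝ g p) p := (analyticAt_of_harmonicAt hg).hasStrictFDerivAt
  obtain ⟨e, he⟩ : ∃ e : ℂ ≃L[ℝ] ℂ, (e : ℂ →L[ℝ] ℂ) = fderiv ℝ g p := by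
    refine exists_continuousLinearEquiv_eq_of_forall_comp_ne_zero fun ℓ hℓ => ?_
    rw [← (ℓ.hasFDerivAt.comp p hgp.hasFDerivAt).fderiv]
    refine fderiv_ne_zero_of_isPreconnected_frontier_inter hΩ hΩb
      (ℓ.continuous.comp_continuousOn hgc) (hextr ℓ hℓ) hp (hg.comp_CLM ℓ) (harc ℓ _) ?_
    simpa using harc (-ℓ) (-ℓ (g p))
  exact ⟨e, he ▸ hgp⟩

end RadoKneserChoquet

theorem stmt_2_general {Ω : Set ℂ} (hΩ : IsOpen Ω) (hΩb : Bornology.IsBounded Ω)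
    (hΩc : IsConnected Ω) {γ : ℂ → ℂ} (hγ : ContinuousOn γ (sphere 0 1))
    (hΓ : frontier Ω = γ '' sphere 0 1) {g : ℂ → ℂ} (hgc : ContinuousOn g (closure Ω))
    (hg : HarmonicOnNhd g Ω) (hgγ : ∀ z ∈ sphere 0 1, g (γ z) = z) (n : WithTop ℕ∞) :
    ContDiffOn ℝ n g Ω ∧ InjOn g Ω ∧ g '' Ω = ball 0 1 ∧
      ∃ ginv : ℂ → ℂ, ContDiffOn ℝ n ginv (ball 0 1) ∧ (∀ p ∈ Ω, ginv (g p) = p) ∧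
        ∀ w ∈ ball 0 1, g (ginv w) = w := by
  have sphere_subset : sphere 0 1 ⊆ g '' closure Ω := fun z hz =>
    ⟨γ z, frontier_subset_closure (hΓ ▸ mem_image_of_mem γ hz), hgγ z hz⟩
  have not_extr (ℓ : ℂ →L[ℝ] ℝ) (hℓ : ℓ ≠ 0) (z) (hz : z ∈ Ω) : ¬ IsLocalExtr (ℓ ∘ g) z :=
    not_isLocalExtr_clm_comp hΩc.isPreconnected hgc hg sphere_subset hℓ hz
  have strictDiff (p) (hp : p ∈ Ω) : ∃ e : ℂ ≃L[ℝ] ℂ, HasStrictFDerivAt g (e : ℂ →L[ℝ] ℂ) p :=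
    exists_hasStrictFDerivAt_equiv_of_forall_isPreconnected hΩ hΩb hgc not_extr
      (isPreconnected_frontier_inter_lt_clm hγ hΓ hgγ) hp (hg p hp)
  have contDiff : ContDiffOn ℝ n g Ω := fun p hp =>
    (analyticAt_of_harmonicAt (hg p hp)).contDiffAt.contDiffWithinAt
  have norm_frontier : ∀ y ∈ frontier Ω, ‖g y‖ = 1 := by
    rw [hΓ, forall_mem_image]
    exact fun z hz => (hgγ z hz).symm ▸ mem_sphere_zero_iff_norm.1 hz
  have mapsTo : MapsTo g Ω (ball 0 1) :=
    mapsTo_ball_of_forall_frontier_norm_le hΩ hΩb.isCompact_closure hgc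
      (fun ℓ hℓ z hz hmax => not_extr ℓ hℓ z hz (.inr hmax)) fun y hy => (norm_frontier y hy).le
  have : ContractibleSpace (ball (0 : ℂ) 1) :=
    (convex_ball 0 1).contractibleSpace ⟨0, mem_ball_self one_pos⟩
  have bij : BijOn g Ω (ball 0 1) := bijOn_of_isLocalHomeomorphOn_of_forall_frontier hΩ
    (hΩ.isConnected_iff_isPathConnected.1 hΩc) hΩb.isCompact_closure isOpen_ball hgc mapsTo
    (fun y hy hball => (mem_ball_zero_iff.1 hball).ne (norm_frontier y hy))
    (isLocalHomeomorphOn_of_hasStrictFDerivAt_equiv strictDiff)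
  obtain ⟨ginv, ginv_contDiff, ginv_left, ginv_right⟩ :=
    exists_contDiffOn_invOn_of_hasStrictFDerivAt_equiv hΩ bij contDiff strictDiff
  exact ⟨contDiff, bij.injOn, bij.image_eq, ginv, ginv_contDiff, ginv_left, ginv_right⟩

theorem stmt_2 (Ω : Set ℂ) (hΩo : IsOpen Ω) (hΩb : Bornology.IsBounded Ω)
    (hΩsc : SimplyConnectedSpace Ω)
    (γ : ℂ → ℂ) (hγinj : Set.InjOn γ (Metric.sphere (0 : ℂ) 1))
    (hγC2 : ContDiffOn ℝ 2 γ (Metric.sphere (0 : ℂ) 1))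
    (hΓ : frontier Ω = γ '' Metric.sphere (0 : ℂ) 1)
    (g : ℂ → ℂ) (hgc : ContinuousOn g (closure Ω))
    (hgre : HarmonicOnSet (fun z => (g z).re) Ω)
    (hgim : HarmonicOnSet (fun z => (g z).im) Ω)
    (hgb : ∀ z ∈ Metric.sphere (0 : ℂ) 1, g (γ z) = z) :
    ContDiffOn ℝ 2 g Ω ∧ Set.InjOn g Ω ∧ g '' Ω = Metric.ball (0 : ℂ) 1 ∧
      ∃ ginv : ℂ → ℂ,
        ContDiffOn ℝ 2 ginv (Metric.ball (0 : ℂ) 1) ∧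
        (∀ p ∈ Ω, ginv (g p) = p) ∧
        (∀ w ∈ Metric.ball (0 : ℂ) 1, g (ginv w) = w) :=
  stmt_2_general hΩo hΩb (isPathConnected_iff_pathConnectedSpace.2 inferInstance).isConnected
    hγC2.continuousOn hΓ hgc
    (harmonicOnNhd_of_re_of_im (hgre.harmonicOnNhd hΩo) (hgim.harmonicOnNhd hΩo)) hgb 2
end
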